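/- Fix an integer d ≥ 1 and δ ∈ (0,1). Let a^{jk} : ℝ → ℝ (1 ≤ j,k ≤ d) be measurable functions of x¹ only, with a^{jk} = a^{kj} and δ|θ|² ≤ Σ_{j,k=1}^d a^{jk}(x¹) θ^j θ^k ≤ δ⁻¹|θ|² for all x¹ and θ ∈ ℝ^d. Set L₀u = u_t + Σ_{j,k} a^{jk}(x¹) u_{x^j x^k}. Let 2 < r < 3. If h is smooth on Q_4, h ∈ L²(Q_4), and L₀h = 0 in Q_4, then sup_{Q_1} |h| + sup_{Q_1} |h_{x¹}| ≤ N (∫_{Q_r} |h|² dx dt)^{1/2}, where N = N(r,d,δ). -/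

import Mathlib

open MeasureTheory

/-- Partial derivative in `t`. -/
noncomputable def pdt {d : ℕ} (u : ℝ × (Fin d → ℝ) → ℝ) : ℝ × (Fin d → ℝ) → ℝ :=
  fun p => fderiv ℝ u p (1, 0)

/-- Partial derivative in `x^j`. -/
noncomputable def pdx {d : ℕ} (j : Fin d) (u : ℝ × (Fin d → ℝ) → ℝ) :
    ℝ × (Fin d → ℝ) → ℝ :=
  fun p => fderiv ℝ u p (0, Pi.single j 1)

/-- Second partial derivative in `x^j, x^k`. -/
noncomputable def pdxx {d : ℕ} (j k : Fin d) (u : ℝ × (Fin d → ℝ) → ℝ) :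
    ℝ × (Fin d → ℝ) → ℝ :=
  pdx j (pdx k u)

/-- Open Euclidean ball `B_r ⊂ ℝ^d` centered at the origin. -/
def ballE (d : ℕ) (r : ℝ) : Set (Fin d → ℝ) := {x | ∑ j, (x j) ^ 2 < r ^ 2}

/-- Parabolic cylinder `Q_r = (0,r²) × B_r`. -/
def Qc (d : ℕ) (r : ℝ) : Set (ℝ × (Fin d → ℝ)) := Set.Ioo 0 (r ^ 2) ×ˢ ballE d r

/-!
The equation is invariant under translations in `t` and `x'`, so derivatives of a solution in these
directions are again solutions. Dividing by `a^{11}(x¹)` puts the equation into the divergence form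
`(a^{11})⁻¹ u_t + ∂_j (A^{jk} u_{x^k}) = 0`: an antisymmetric correction moves the coefficients out
of the first row of `A`, and the other rows are differentiated only in `x'`, on which `A` does not
depend. The Caccioppoli inequality then bounds `∇u` in `L²` and, tested against `u_t`, also `u_t`;
iterating it, any number of derivatives in `t` and `x'`, together with at most one in `x¹`, is
bounded by the `L²` norm of `u`. The equation itself, solved for `u_{x¹x¹}`, gives the second
derivative in `x¹`. A Sobolev embedding that differentiates once along each axis turns this into
pointwise bounds for `u` and `u_{x¹}`. As the equation is backward parabolic, all integrations by
parts run over `{t > t₀}`, where the boundary term at `t₀` has a favourable sign; hence the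
estimates hold uniformly down to the bottom `t = 0` of the cylinder.
-/

open Set Filter Topology
open scoped ContDiff

noncomputable section

section DirDeriv

variable {E : Type*} [NormedAddCommGroup E] [NormedSpace ℝ E] {f g : E → ℝ}

/-- The derivative of `f` in the direction `v`, as a function of the base point. -/
def dirDeriv (v : E) (f : E → ℝ) : E → ℝ := fun p => fderiv ℝ f p v

theorem contDiff_dirDeriv (hf : ContDiff ℝ ∞ f) (v : E) : ContDiff ℝ ∞ (dirDeriv v f) :=
  (hf.fderiv_right (m := ∞) (by simp)).clm_apply contDiff_const

theorem continuous_dirDeriv (hf : ContDiff ℝ ∞ f) (v : E) : Continuous (dirDeriv v f) :=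
  (contDiff_dirDeriv hf v).continuous

theorem hasLineDerivAt_dirDeriv (hf : ContDiff ℝ ∞ f) (v p : E) :
    HasLineDerivAt ℝ f (dirDeriv v f p) p v :=
  (hf.differentiable (by simp) p).hasFDerivAt.hasLineDerivAt v

theorem dirDeriv_add (hf : ContDiff ℝ ∞ f) (hg : ContDiff ℝ ∞ g) (v : E) :
    dirDeriv v (fun p => f p + g p) = fun p => dirDeriv v f p + dirDeriv v g p := by
  funext p
  simp only [dirDeriv, fderiv_fun_add (hf.differentiable (by simp) p)
    (hg.differentiable (by simp) p), add_apply]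

theorem dirDeriv_mul (hf : ContDiff ℝ ∞ f) (hg : ContDiff ℝ ∞ g) (v : E) :
    dirDeriv v (fun p => f p * g p) = fun p => dirDeriv v f p * g p + f p * dirDeriv v g p := by
  funext p
  simp only [dirDeriv, fderiv_fun_mul (hf.differentiable (by simp) p)
    (hg.differentiable (by simp) p), add_apply, smul_apply, smul_eq_mul]
  ring

theorem dirDeriv_sq (hf : ContDiff ℝ ∞ f) (v : E) :
    dirDeriv v (fun p => f p ^ 2) = fun p => 2 * f p * dirDeriv v f p := by
  simp only [sq, dirDeriv_mul hf hf]
  funext p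
  ring

theorem dirDeriv_dirDeriv_eq_fderiv_fderiv (hf : ContDiff ℝ ∞ f) (v w p : E) :
    dirDeriv v (dirDeriv w f) p = fderiv ℝ (fderiv ℝ f) p v w := by
  have hdiff : DifferentiableAt ℝ (fderiv ℝ f) p :=
    (hf.fderiv_right (m := ∞) (by simp)).differentiable (by simp) p
  unfold dirDeriv
  rw [(hdiff.hasFDerivAt.clm_apply (hasFDerivAt_const w p)).fderiv]
  simp

theorem dirDeriv_comm (hf : ContDiff ℝ ∞ f) (v w : E) :
    dirDeriv v (dirDeriv w f) = dirDeriv w (dirDeriv v f) := by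
  funext p
  have hsymm : IsSymmSndFDerivAt ℝ f p := hf.contDiffAt.isSymmSndFDerivAt (by
    rw [minSmoothness_of_isRCLikeNormedField]
    exact WithTop.coe_le_coe.2 (le_top : (2 : ℕ∞) ≤ ⊤))
  simpa only [dirDeriv_dirDeriv_eq_fderiv_fderiv hf] using hsymm v w

theorem tsupport_dirDeriv_subset (v : E) (f : E → ℝ) : tsupport (dirDeriv v f) ⊆ tsupport f :=
  tsupport_fderiv_apply_subset ℝ v

theorem dirDeriv_eq_zero_of_notMem_tsupport {p : E} (hp : p ∉ tsupport f) (v : E) :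
    dirDeriv v f p = 0 :=
  image_eq_zero_of_notMem_tsupport fun h => hp (tsupport_dirDeriv_subset v f h)

theorem dirDeriv_congr_of_eventuallyEq {p : E} (h : f =ᶠ[𝓝 p] g) (v : E) :
    dirDeriv v f =ᶠ[𝓝 p] dirDeriv v g :=
  h.fderiv.fun_comp (· v)

/-- The iterated directional derivative of `f` along the list `L`; the head of `L` is the direction
differentiated first. -/
def iterDirDeriv (L : List E) (f : E → ℝ) : E → ℝ := L.foldl (fun g v => dirDeriv v g) f

theorem iterDirDeriv_append (L L' : List E) (f : E → ℝ) :
    iterDirDeriv (L ++ L') f = iterDirDeriv L' (iterDirDeriv L f) :=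
  List.foldl_append

theorem contDiff_iterDirDeriv (hf : ContDiff ℝ ∞ f) (L : List E) :
    ContDiff ℝ ∞ (iterDirDeriv L f) := by
  induction L generalizing f with
  | nil => exact hf
  | cons v _ ih => exact ih (contDiff_dirDeriv hf v)

theorem tsupport_iterDirDeriv_subset (L : List E) (f : E → ℝ) :
    tsupport (iterDirDeriv L f) ⊆ tsupport f := by
  induction L generalizing f with
  | nil => exact subset_rfl
  | cons v L ih => exact (ih _).trans (tsupport_dirDeriv_subset v f)

theorem iterDirDeriv_congr_of_eventuallyEq {p : E} (h : f =ᶠ[𝓝 p] g) (L : List E) :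
    iterDirDeriv L f =ᶠ[𝓝 p] iterDirDeriv L g := by
  induction L generalizing f g with
  | nil => exact h
  | cons v _ ih => exact ih (dirDeriv_congr_of_eventuallyEq h v)

theorem iterDirDeriv_add (hf : ContDiff ℝ ∞ f) (hg : ContDiff ℝ ∞ g) (L : List E) :
    iterDirDeriv L (fun p => f p + g p) = fun p => iterDirDeriv L f p + iterDirDeriv L g p := by
  induction L generalizing f g with
  | nil => rfl
  | cons v L ih =>
    change iterDirDeriv L (dirDeriv v fun p => f p + g p) = _
    rw [dirDeriv_add hf hg, ih (contDiff_dirDeriv hf v) (contDiff_dirDeriv hg v)]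
    rfl

theorem dirDeriv_iterDirDeriv_comm (hf : ContDiff ℝ ∞ f) (v : E) (L : List E) :
    dirDeriv v (iterDirDeriv L f) = iterDirDeriv L (dirDeriv v f) := by
  induction L generalizing f with
  | nil => rfl
  | cons w L ih =>
    change dirDeriv v (iterDirDeriv L (dirDeriv w f)) = iterDirDeriv L (dirDeriv w (dirDeriv v f))
    rw [ih (contDiff_dirDeriv hf w), dirDeriv_comm hf]

end DirDeriv

section TestFunction

variable {E : Type*} [NormedAddCommGroup E] [NormedSpace ℝ E] {U : Set E} {ψ f F : E → ℝ}

/-- `ψ` is a smooth function with compact support inside `U`, i.e. `ψ ∈ C_c^∞(U)`. -/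
structure IsTestFunction (U : Set E) (ψ : E → ℝ) : Prop where
  contDiff : ContDiff ℝ ∞ ψ
  hasCompactSupport : HasCompactSupport ψ
  tsupport_subset : tsupport ψ ⊆ U

namespace IsTestFunction

theorem mul_right (hψ : IsTestFunction U ψ) (hf : ContDiff ℝ ∞ f) :
    IsTestFunction U fun p => ψ p * f p where
  contDiff := hψ.contDiff.mul hf
  hasCompactSupport := hψ.hasCompactSupport.mul_right
  tsupport_subset := tsupport_mul_subset_left.trans hψ.tsupport_subset

protected theorem sq (hψ : IsTestFunction U ψ) : IsTestFunction U fun p => ψ p ^ 2 := by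
  simpa only [pow_two] using hψ.mul_right hψ.contDiff

protected theorem dirDeriv (hψ : IsTestFunction U ψ) (v : E) : IsTestFunction U (dirDeriv v ψ) where
  contDiff := contDiff_dirDeriv hψ.contDiff v
  hasCompactSupport := hψ.hasCompactSupport.of_isClosed_subset (isClosed_tsupport _)
    (tsupport_dirDeriv_subset v ψ)
  tsupport_subset := (tsupport_dirDeriv_subset v ψ).trans hψ.tsupport_subset

protected theorem iterDirDeriv (hψ : IsTestFunction U ψ) (L : List E) :
    IsTestFunction U (iterDirDeriv L ψ) where
  contDiff := contDiff_iterDirDeriv hψ.contDiff L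
  hasCompactSupport := hψ.hasCompactSupport.of_isClosed_subset (isClosed_tsupport _)
    (tsupport_iterDirDeriv_subset L ψ)
  tsupport_subset := (tsupport_iterDirDeriv_subset L ψ).trans hψ.tsupport_subset

variable [MeasurableSpace E] [BorelSpace E] {μ : Measure E} [IsFiniteMeasureOnCompacts μ]

theorem integrable_of_eq_zero (hψ : IsTestFunction U ψ) (hF : Continuous F)
    (hzero : ∀ p ∉ tsupport ψ, F p = 0) : Integrable F μ :=
  hF.integrable_of_hasCompactSupport (.intro hψ.hasCompactSupport hzero)

theorem integrable_mul (hψ : IsTestFunction U ψ) (hF : Continuous F) :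
    Integrable (fun p => ψ p * F p) μ :=
  hψ.integrable_of_eq_zero (hψ.contDiff.continuous.mul hF) fun p hp => by
    rw [image_eq_zero_of_notMem_tsupport hp, zero_mul]

theorem integrable_sq (hψ : IsTestFunction U ψ) : Integrable (fun p => ψ p ^ 2) μ := by
  simpa only [pow_two] using hψ.integrable_mul (μ := μ) hψ.contDiff.continuous

theorem integrable_bdd_mul_mul (hψ : IsTestFunction U ψ) (hF : Continuous F) {c : E → ℝ}
    (hc : Measurable c) {M : ℝ} (hcM : ∀ p, |c p| ≤ M) :
    Integrable (fun p => c p * (ψ p * F p)) μ :=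
  (hψ.integrable_mul hF).bdd_mul hc.aestronglyMeasurable (.of_forall hcM)

end IsTestFunction

theorem exists_isTestFunction_eq_one_on [FiniteDimensional ℝ E] {K : Set E} (hK : IsCompact K)
    (hU : IsOpen U) (hKU : K ⊆ U) :
    ∃ η, IsTestFunction U η ∧ ∀ p ∈ K, η p = 1 := by
  obtain ⟨V, hV, hKV, hVU, hVcompact⟩ := exists_open_between_and_isCompact_closure hK hU hKU
  obtain ⟨η, hη, -, hsupp, hone⟩ := exists_contMDiff_support_eq_eq_one_iff
    (modelWithCornersSelf ℝ E) (n := ⊤) hV hK.isClosed hKV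
  have htsupp : tsupport η = closure V := by rw [tsupport, hsupp]
  exact ⟨η, ⟨hη.contDiff, by rwa [HasCompactSupport, htsupp], htsupp.trans_subset hVU⟩,
    fun p hp => (hone p).1 hp⟩

theorem exists_contDiff_eqOn [FiniteDimensional ℝ E] {K : Set E} (hK : IsCompact K)
    (hU : IsOpen U) (hKU : K ⊆ U) (hf : ContDiffOn ℝ ∞ f U) :
    ∃ g, ContDiff ℝ ∞ g ∧ EqOn g f K := by
  obtain ⟨η, hη, hηK⟩ := exists_isTestFunction_eq_one_on hK hU hKU
  refine ⟨fun p => η p * f p, contDiff_iff_contDiffAt.2 fun p => ?_, fun p hp => by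
    simp only [hηK p hp, one_mul]⟩
  by_cases hp : p ∈ tsupport η
  · exact hη.contDiff.contDiffAt.mul (hf.contDiffAt (hU.mem_nhds (hη.tsupport_subset hp)))
  · refine (contDiffAt_const (c := (0 : ℝ))).congr_of_eventuallyEq ?_
    filter_upwards [(isClosed_tsupport η).isOpen_compl.mem_nhds hp] with q hq
    rw [image_eq_zero_of_notMem_tsupport hq, zero_mul]

end TestFunction

section Integration

variable {E : Type*} [NormedAddCommGroup E] [NormedSpace ℝ E] {U : Set E} {F : E → ℝ} {v : E}

namespace IsTestFunction

theorem integral_Ioi_dirDeriv_line (hF : IsTestFunction U F) (hv : v ≠ 0) (p : E) (s₀ : ℝ) :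
    ∫ s in Ioi s₀, dirDeriv v F (p + s • v) = -F (p + s₀ • v) := by
  have hderiv : deriv (fun s : ℝ => F (p + s • v)) = fun s => dirDeriv v F (p + s • v) := by
    funext s
    have hline : HasDerivAt (fun s : ℝ => p + s • v) v s := by
      simpa only [id, one_smul] using ((hasDerivAt_id s).smul_const v).const_add p
    exact ((hF.contDiff.differentiable (by simp) _).hasFDerivAt.comp_hasDerivAt s hline).deriv
  have hsmooth : ContDiff ℝ 1 fun s : ℝ => F (p + s • v) :=
    (hF.contDiff.of_le (by exact_mod_cast le_top)).comp (by fun_prop)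
  have hcompact : HasCompactSupport fun s : ℝ => F (p + s • v) :=
    hF.hasCompactSupport.comp_isClosedEmbedding
      ((Homeomorph.addLeft p).isClosedEmbedding.comp (isClosedEmbedding_smul_left hv))
  rw [← hderiv]
  exact hcompact.integral_Ioi_deriv_eq hsmooth s₀

theorem enorm_le_lintegral_Ioi_dirDeriv_line (hF : IsTestFunction U F) (hv : v ≠ 0) (p : E)
    (s₀ : ℝ) :
    ‖F (p + s₀ • v)‖ₑ ≤ ∫⁻ s in Ioi s₀, ‖dirDeriv v F (p + s • v)‖ₑ := by
  rw [← enorm_neg, ← hF.integral_Ioi_dirDeriv_line hv]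
  exact enorm_integral_le_lintegral_enorm _

variable [MeasurableSpace E] [BorelSpace E] {μ : Measure E} {c : E → ℝ} {S : Set E} {M : ℝ}

theorem integral_mul_dirDeriv_eq_zero [FiniteDimensional ℝ E] [μ.IsAddHaarMeasure]
    (hF : IsTestFunction U F) (hc : Measurable c) (hcM : ∀ p, |c p| ≤ M)
    (hcv : ∀ p (s : ℝ), c (p + s • v) = c p) :
    ∫ p, c p * dirDeriv v F p ∂μ = 0 := by
  have hint : Integrable (fun p => c p * F p) μ := by
    simpa using hF.integrable_bdd_mul_mul (F := 1) continuous_const hc hcM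
  have hint' : Integrable (fun p => c p * dirDeriv v F p) μ := by
    simpa using (hF.dirDeriv v).integrable_bdd_mul_mul (F := 1) continuous_const hc hcM
  have hline : ∀ p, HasLineDerivAt ℝ (fun p => c p * F p) (c p * dirDeriv v F p) p v := fun p =>
    ((hasLineDerivAt_dirDeriv hF.contDiff v p).const_mul (c p)).congr_of_eventuallyEq
      (.of_forall fun s => by simp only [hcv])
  simpa using integral_bilinear_hasLineDerivAt_right_eq_neg_left_of_integrable
    (μ := μ) (f := fun p => c p * F p) (f' := fun p => c p * dirDeriv v F p)
    (g := fun _ => (1 : ℝ)) (g' := fun _ => (0 : ℝ)) (B := ContinuousLinearMap.mul ℝ ℝ)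
    (by simpa using hint') (by simp) (by simpa using hint)
    (fun p _ => hline p) (fun p _ => hasDerivAt_const _ _)

theorem setIntegral_mul_dirDeriv_eq_zero [FiniteDimensional ℝ E] [μ.IsAddHaarMeasure]
    (hF : IsTestFunction U F) (hS : MeasurableSet S) (hSv : ∀ p (s : ℝ), p + s • v ∈ S ↔ p ∈ S)
    (hc : Measurable c) (hcM : ∀ p, |c p| ≤ M) (hcv : ∀ p (s : ℝ), c (p + s • v) = c p) :
    ∫ p in S, c p * dirDeriv v F p ∂μ = 0 := by
  rw [← integral_indicator hS]
  simp only [indicator_mul_left]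
  refine hF.integral_mul_dirDeriv_eq_zero (hc.indicator hS) (M := M) (fun p => ?_) fun p s => ?_
  · exact (norm_indicator_le_norm_self c p).trans (hcM p)
  · classical simp only [indicator_apply, hSv, hcv]

end IsTestFunction

variable [MeasurableSpace E] [BorelSpace E]

theorem IsTestFunction.setIntegral_le_integral_sq_mul {μ : Measure E} [IsFiniteMeasureOnCompacts μ]
    {η : E → ℝ} {K : Set E} (hη : IsTestFunction U η) (hK : MeasurableSet K)
    (hηK : ∀ p ∈ K, η p = 1) (hF : Continuous F) (hF0 : 0 ≤ F) :
    ∫ p in K, F p ∂μ ≤ ∫ p, η p ^ 2 * F p ∂μ := by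
  rw [setIntegral_congr_fun (g := fun p => η p ^ 2 * F p) hK fun p hp => by simp [hηK p hp]]
  exact setIntegral_le_integral (hη.sq.integrable_mul hF)
    (.of_forall fun p => mul_nonneg (sq_nonneg _) (hF0 p))

theorem IsTestFunction.integral_add_sq_le {μ : Measure E} [IsFiniteMeasureOnCompacts μ]
    {f g : E → ℝ} (hf : IsTestFunction U f) (hg : IsTestFunction U g) :
    ∫ p, (f p + g p) ^ 2 ∂μ ≤ 2 * ∫ p, f p ^ 2 ∂μ + 2 * ∫ p, g p ^ 2 ∂μ := by
  have hf2 : Integrable (fun p => f p ^ 2) μ := hf.integrable_sq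
  have hg2 : Integrable (fun p => g p ^ 2) μ := hg.integrable_sq
  rw [← integral_const_mul, ← integral_const_mul,
    ← integral_add (hf2.const_mul 2) (hg2.const_mul 2)]
  refine integral_mono_of_nonneg (.of_forall fun p => sq_nonneg _)
    ((hf2.const_mul 2).add (hg2.const_mul 2)) (.of_forall fun p => ?_)
  linarith [add_sq_le (a := f p) (b := g p)]

end Integration

theorem exists_integral_mul_le_mul_setIntegral {X : Type*} [TopologicalSpace X]
    [T2Space X] [MeasurableSpace X] [OpensMeasurableSpace X] {g : X → ℝ} {K : Set X}
    (hg : Continuous g) (hK : IsCompact K) (hgK : ∀ p ∉ K, g p = 0) :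
    ∃ C : ℝ, 0 ≤ C ∧ ∀ (μ : Measure X) [IsFiniteMeasureOnCompacts μ] (F : X → ℝ),
      Continuous F → 0 ≤ F → ∫ p, g p * F p ∂μ ≤ C * ∫ p in K, F p ∂μ := by
  obtain ⟨C, hC⟩ := hK.exists_bound_of_continuousOn hg.continuousOn
  refine ⟨max C 0, le_max_right _ _, fun μ _ F hF hF0 => ?_⟩
  rw [← setIntegral_eq_integral_of_forall_compl_eq_zero (s := K)
    fun p hp => by rw [hgK p hp, zero_mul], ← integral_const_mul]
  refine setIntegral_mono_on ((hg.mul hF).continuousOn.integrableOn_compact hK)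
    ((hF.const_mul _).continuousOn.integrableOn_compact hK) hK.measurableSet fun p hp => ?_
  exact mul_le_mul_of_nonneg_right ((le_abs_self _).trans ((hC p hp).trans (le_max_left _ _)))
    (hF0 p)

theorem sq_integral_le_measureReal_mul_integral_sq {X : Type*} [MeasurableSpace X] {μ : Measure X}
    [IsFiniteMeasure μ] {f : X → ℝ} (hf : Integrable f μ) (hf2 : Integrable (fun p => f p ^ 2) μ) :
    (∫ p, f p ∂μ) ^ 2 ≤ μ.real univ * ∫ p, f p ^ 2 ∂μ := by
  have hquad : ∀ l : ℝ, 0 ≤ μ.real univ * (l * l) + -2 * (∫ p, f p ∂μ) * l + ∫ p, f p ^ 2 ∂μ := by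
    intro l
    have hexpand : ∫ p, (l - f p) ^ 2 ∂μ =
        μ.real univ * (l * l) + -2 * (∫ p, f p ∂μ) * l + ∫ p, f p ^ 2 ∂μ := by
      have hpoint : ∀ p, (l - f p) ^ 2 = l * l + (-2 * l) * f p + f p ^ 2 := fun p => by ring
      simp only [hpoint]
      have hlin : Integrable (fun p => l * l + -2 * l * f p) μ :=
        (integrable_const _).add (hf.const_mul _)
      rw [integral_add hlin hf2,
        integral_add (integrable_const _) (hf.const_mul _), integral_const, integral_const_mul,
        smul_eq_mul]
      ring
    exact hexpand ▸ integral_nonneg fun p => sq_nonneg _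
  have hdiscrim := discrim_le_zero hquad
  rw [discrim] at hdiscrim
  linarith

section SpaceTime

variable {d : ℕ}

/-- The space `ℝ × ℝ^d` of points `(t, x)`. -/
abbrev SpaceTime (d : ℕ) : Type := ℝ × (Fin d → ℝ)

instance : (volume : Measure (SpaceTime d)).IsAddHaarMeasure :=
  inferInstanceAs ((volume : Measure ℝ).prod (volume : Measure (Fin d → ℝ))).IsAddHaarMeasure

/-- The unit vector of the time axis, so that `dirDeriv (timeDir d)` is `∂/∂t`. -/
def timeDir (d : ℕ) : SpaceTime d := (1, 0)

/-- The unit vector of the `j`-th space axis, so that `dirDeriv (spaceDir j)` is `∂/∂x^j`. -/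
def spaceDir (j : Fin d) : SpaceTime d := (0, Pi.single j 1)

theorem timeDir_ne_zero : timeDir d ≠ 0 := by
  simp [timeDir, Prod.ext_iff]

theorem spaceDir_ne_zero (j : Fin d) : spaceDir j ≠ 0 := by
  simp [spaceDir, Prod.ext_iff]

theorem spaceDir_snd_eq_zero_of_ne {i j : Fin d} (h : j ≠ i) : (spaceDir j).2 i = 0 := by
  simp [spaceDir, h.symm]

theorem add_smul_timeDir (t : ℝ) (x : Fin d → ℝ) :
    ((0, x) : SpaceTime d) + t • timeDir d = (t, x) := by
  simp [timeDir]

theorem add_smul_spaceDir (t s : ℝ) (x : Fin d → ℝ) (j : Fin d) :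
    ((t, Function.update x j 0) : SpaceTime d) + s • spaceDir j = (t, Function.update x j s) := by
  ext k
  · simp [spaceDir]
  · obtain rfl | h := eq_or_ne k j
    · simp [spaceDir]
    · simp [spaceDir, h]

/-- Lebesgue measure on the part `{t > t₀}` of space-time. -/
def volumeAfter (d : ℕ) (t₀ : ℝ) : Measure (SpaceTime d) := volume.restrict {p | t₀ < p.1}

instance (t₀ : ℝ) : IsFiniteMeasureOnCompacts (volumeAfter d t₀) :=
  inferInstanceAs (IsFiniteMeasureOnCompacts (volume.restrict _))

theorem measurableSet_after (t₀ : ℝ) : MeasurableSet {p : SpaceTime d | t₀ < p.1} :=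
  measurableSet_lt measurable_const measurable_fst

theorem volumeAfter_eq_prod (t₀ : ℝ) :
    volumeAfter d t₀ = (volume.restrict (Ioi t₀)).prod volume := by
  have hset : {p : SpaceTime d | t₀ < p.1} = Ioi t₀ ×ˢ univ := by ext p; simp
  rw [volumeAfter, hset, Measure.volume_eq_prod, ← Measure.prod_restrict, Measure.restrict_univ]

namespace IsTestFunction

variable {U : Set (SpaceTime d)} {F : SpaceTime d → ℝ}

theorem integral_volumeAfter_mul_dirDeriv_timeDir_nonpos (hF : IsTestFunction U F) (hF0 : 0 ≤ F)
    {b : (Fin d → ℝ) → ℝ} {M : ℝ} (hb : Measurable b) (hbM : ∀ x, |b x| ≤ M) (hb0 : 0 ≤ b)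
    (t₀ : ℝ) :
    ∫ p, b p.2 * dirDeriv (timeDir d) F p ∂(volumeAfter d t₀) ≤ 0 := by
  have hint : Integrable (fun p => b p.2 * dirDeriv (timeDir d) F p) (volumeAfter d t₀) := by
    simpa using (hF.dirDeriv (timeDir d)).integrable_bdd_mul_mul (F := 1)
      continuous_const (hb.comp measurable_snd) fun p => hbM p.2
  rw [volumeAfter_eq_prod] at hint ⊢
  rw [integral_prod_symm _ hint]
  refine integral_nonpos fun x => ?_
  have hline := hF.integral_Ioi_dirDeriv_line timeDir_ne_zero (0, x) t₀
  simp only [add_smul_timeDir] at hline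
  change ∫ t in Ioi t₀, b x * dirDeriv (timeDir d) F (t, x) ≤ 0
  rw [integral_const_mul, hline, mul_neg, neg_nonpos]
  exact mul_nonneg (hb0 x) (hF0 (t₀, x))

theorem integral_volumeAfter_mul_sq_mul_dirDeriv_timeDir_le (hF : IsTestFunction U F)
    {u : SpaceTime d → ℝ} (hu : ContDiff ℝ ∞ u) {b : (Fin d → ℝ) → ℝ} {M : ℝ} (hb : Measurable b)
    (hbM : ∀ x, |b x| ≤ M) (hb0 : 0 ≤ b) (t₀ : ℝ) :
    ∫ p, b p.2 * (F p ^ 2 * u p * dirDeriv (timeDir d) u p) ∂(volumeAfter d t₀) ≤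
      M * ∫ p, |F p * dirDeriv (timeDir d) F p| * u p ^ 2 ∂(volumeAfter d t₀) := by
  have hFu : IsTestFunction U fun p => (F p * u p) ^ 2 := (hF.mul_right hu).sq
  have hdt : dirDeriv (timeDir d) (fun p => (F p * u p) ^ 2) = fun p =>
      2 * (F p * dirDeriv (timeDir d) F p * u p ^ 2 +
        F p ^ 2 * u p * dirDeriv (timeDir d) u p) := by
    rw [dirDeriv_sq (hF.contDiff.mul hu), dirDeriv_mul hF.contDiff hu]
    funext p
    ring
  have hcu := hu.continuous
  have hcF := hF.contDiff.continuous
  have hcdF := continuous_dirDeriv hF.contDiff (timeDir d)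
  have hbF : Integrable (fun p => b p.2 * dirDeriv (timeDir d) (fun p => (F p * u p) ^ 2) p)
      (volumeAfter d t₀) := by
    simpa using (hFu.dirDeriv (timeDir d)).integrable_bdd_mul_mul (F := 1) continuous_const
      (hb.comp measurable_snd) fun p => hbM p.2
  have hint : Integrable (fun p => b p.2 * (F p ^ 2 * u p * dirDeriv (timeDir d) u p))
      (volumeAfter d t₀) := by
    simpa only [mul_assoc, Function.comp_apply] using hF.sq.integrable_bdd_mul_mul
      (hcu.fun_mul (continuous_dirDeriv hu (timeDir d))) (hb.comp measurable_snd) fun p => hbM p.2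
  have hint' : Integrable (fun p => |F p * dirDeriv (timeDir d) F p| * u p ^ 2)
      (volumeAfter d t₀) := hF.integrable_of_eq_zero (by fun_prop) fun p hp => by
    simp [image_eq_zero_of_notMem_tsupport hp]
  have hpoint : ∀ p, b p.2 * (F p ^ 2 * u p * dirDeriv (timeDir d) u p) ≤
      1 / 2 * (b p.2 * dirDeriv (timeDir d) (fun p => (F p * u p) ^ 2) p) +
        M * (|F p * dirDeriv (timeDir d) F p| * u p ^ 2) := by
    intro p
    have hle := mul_le_mul_of_nonneg_right (hbM p.2)
      (abs_nonneg (F p * dirDeriv (timeDir d) F p * u p ^ 2))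
    rw [← abs_mul, abs_mul _ (u p ^ 2), abs_of_nonneg (sq_nonneg (u p))] at hle
    simp only [hdt]
    linarith [neg_le_abs (b p.2 * (F p * dirDeriv (timeDir d) F p * u p ^ 2))]
  refine (integral_mono hint ((hbF.const_mul _).add (hint'.const_mul _)) hpoint).trans ?_
  simp only [Pi.add_apply]
  rw [integral_add (hbF.const_mul _) (hint'.const_mul _), integral_const_mul, integral_const_mul]
  linarith [hFu.integral_volumeAfter_mul_dirDeriv_timeDir_nonpos (fun p => sq_nonneg _) hb hbM hb0
    t₀]

theorem integral_volumeAfter_mul_dirDeriv_spaceDir_eq_zero (hF : IsTestFunction U F) {j : Fin d}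
    {c : SpaceTime d → ℝ} {M : ℝ} (hc : Measurable c) (hcM : ∀ p, |c p| ≤ M)
    (hcj : ∀ p (s : ℝ), c (p + s • spaceDir j) = c p) (t₀ : ℝ) :
    ∫ p, c p * dirDeriv (spaceDir j) F p ∂(volumeAfter d t₀) = 0 :=
  hF.setIntegral_mul_dirDeriv_eq_zero (measurableSet_after t₀) (fun p s => by simp [spaceDir])
    hc hcM hcj

end IsTestFunction

end SpaceTime

theorem abs_mul_mul_le_add {c M ε : ℝ} (hc : |c| ≤ M) (hε : 0 < ε) (x y : ℝ) :
    |c * (x * y)| ≤ ε * x ^ 2 + M ^ 2 / (4 * ε) * y ^ 2 := by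
  have hbound : |c * (x * y)| ≤ M * (|x| * |y|) := by
    rw [abs_mul, abs_mul]
    exact mul_le_mul_of_nonneg_right hc (by positivity)
  have hsquare : ε * |x| ^ 2 + M ^ 2 / (4 * ε) * |y| ^ 2 - M * (|x| * |y|) =
      ε * (|x| - M / (2 * ε) * |y|) ^ 2 := by
    field_simp
    ring
  have hnonneg : 0 ≤ ε * (|x| - M / (2 * ε) * |y|) ^ 2 := by positivity
  rw [sq_abs, sq_abs] at hsquare
  linarith

theorem abs_sum_sum_mul_le {ι : Type*} [Fintype ι] {c : ι → ι → ℝ} {M ε : ℝ}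
    (hc : ∀ j k, |c j k| ≤ M) (hε : 0 < ε) (ζ ξ : ι → ℝ) :
    |∑ j, ∑ k, c j k * (ζ j * ξ k)| ≤
      ε * ∑ j, ζ j ^ 2 + (Fintype.card ι * M) ^ 2 / (4 * ε) * ∑ k, ξ k ^ 2 := by
  cases isEmpty_or_nonempty ι
  · simp
  calc |∑ j, ∑ k, c j k * (ζ j * ξ k)|
      ≤ ∑ j, ∑ k, |c j k * (ζ j * ξ k)| :=
        (Finset.abs_sum_le_sum_abs _ _).trans
          (Finset.sum_le_sum fun _ _ => Finset.abs_sum_le_sum_abs _ _)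
    _ ≤ ∑ j, ∑ k, (ε / Fintype.card ι * ζ j ^ 2 +
          M ^ 2 / (4 * (ε / Fintype.card ι)) * ξ k ^ 2) :=
        Finset.sum_le_sum fun j _ => Finset.sum_le_sum fun k _ =>
          abs_mul_mul_le_add (hc j k) (by positivity) _ _
    _ = _ := by
        simp only [Finset.sum_add_distrib, Finset.sum_const, Finset.card_univ, nsmul_eq_mul,
          ← Finset.mul_sum]
        field_simp

section Coefficients

variable {d : ℕ} {δ : ℝ} {a : ℝ → Fin d → Fin d → ℝ}

/-- `a` is a measurable, symmetric matrix function of one variable with all its eigenvalues in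
`[δ, δ⁻¹]`, where `0 < δ`. -/
structure UniformlyElliptic (δ : ℝ) (a : ℝ → Fin d → Fin d → ℝ) : Prop where
  pos : 0 < δ
  measurable : ∀ j k, Measurable fun s => a s j k
  symm : ∀ s j k, a s j k = a s k j
  lower : ∀ s (θ : Fin d → ℝ), δ * ∑ j, θ j ^ 2 ≤ ∑ j, ∑ k, a s j k * θ j * θ k
  upper : ∀ s (θ : Fin d → ℝ), ∑ j, ∑ k, a s j k * θ j * θ k ≤ δ⁻¹ * ∑ j, θ j ^ 2

namespace UniformlyElliptic

theorem le_diag (ha : UniformlyElliptic δ a) (s : ℝ) (j : Fin d) : δ ≤ a s j j := by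
  simpa [Pi.single_apply] using ha.lower s (Pi.single j 1)

theorem diag_le (ha : UniformlyElliptic δ a) (s : ℝ) (j : Fin d) : a s j j ≤ δ⁻¹ := by
  simpa [Pi.single_apply] using ha.upper s (Pi.single j 1)

theorem diag_pos (ha : UniformlyElliptic δ a) (s : ℝ) (j : Fin d) : 0 < a s j j :=
  ha.pos.trans_le (ha.le_diag s j)

theorem le_inv_diag (ha : UniformlyElliptic δ a) (s : ℝ) (j : Fin d) : δ ≤ (a s j j)⁻¹ :=
  (le_inv_comm₀ ha.pos (ha.diag_pos s j)).2 (ha.diag_le s j)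

theorem inv_diag_le (ha : UniformlyElliptic δ a) (s : ℝ) (j : Fin d) : (a s j j)⁻¹ ≤ δ⁻¹ :=
  inv_anti₀ ha.pos (ha.le_diag s j)

theorem abs_inv_diag_le (ha : UniformlyElliptic δ a) (s : ℝ) (j : Fin d) : |(a s j j)⁻¹| ≤ δ⁻¹ := by
  rw [abs_of_pos (inv_pos.2 (ha.diag_pos s j))]
  exact ha.inv_diag_le s j

protected theorem abs_le (ha : UniformlyElliptic δ a) (s : ℝ) (j k : Fin d) : |a s j k| ≤ δ⁻¹ := by
  have hquad : ∀ σ : ℝ, 0 ≤ a s k k * (σ * σ) + 2 * a s j k * σ + a s j j := by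
    intro σ
    have hpos := (mul_nonneg ha.pos.le (Finset.sum_nonneg fun _ _ => sq_nonneg _)).trans
      (ha.lower s (Pi.single j 1 + Pi.single k σ))
    simp only [Pi.add_apply, Pi.single_apply, mul_add, add_mul, mul_ite, ite_mul, mul_one, mul_zero,
      zero_mul, Finset.sum_add_distrib, Finset.sum_ite_eq', Finset.mem_univ, if_true,
      ha.symm s k j] at hpos
    linarith
  have hdiscrim := discrim_le_zero hquad
  rw [discrim] at hdiscrim
  have hprod : a s k k * a s j j ≤ δ⁻¹ * δ⁻¹ :=
    mul_le_mul (ha.diag_le s k) (ha.diag_le s j) (ha.diag_pos s j).le (inv_nonneg.2 ha.pos.le)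
  exact abs_le_of_sq_le_sq (by linarith) (inv_nonneg.2 ha.pos.le)

end UniformlyElliptic

/-- The coefficients of the divergence form of `(a^{i₀i₀})⁻¹ ∑ a^{jk} ∂_j ∂_k`: the second-order
terms `∂_{i₀} ∂_k` are all written with `∂_k` outermost. An antisymmetric correction moves
`a^{i₀k}` out of the row `i₀`, and the division by `a^{i₀i₀}` makes the remaining entry of that row
equal to `1`, so that every coefficient `A^{jk}(x^{i₀})` commutes with `∂_j`. -/
def divCoeff (i₀ : Fin d) (a : ℝ → Fin d → Fin d → ℝ) (s : ℝ) (j k : Fin d) : ℝ :=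
  (a s j k + (if k = i₀ then a s i₀ j else 0) - (if j = i₀ then a s i₀ k else 0)) / a s i₀ i₀

theorem sum_divCoeff_mul (i₀ : Fin d) (s : ℝ) {H : Fin d → Fin d → ℝ} (hH : ∀ j k, H j k = H k j) :
    ∑ j, ∑ k, divCoeff i₀ a s j k * H j k =
      (a s i₀ i₀)⁻¹ * ∑ j, ∑ k, a s j k * H j k := by
  have hentry : ∀ j k, divCoeff i₀ a s j k * H j k = (a s i₀ i₀)⁻¹ * (a s j k * H j k +
      (if k = i₀ then a s i₀ j * H j i₀ else 0) - if j = i₀ then a s i₀ k * H i₀ k else 0) := by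
    intro j k
    unfold divCoeff
    split_ifs <;> subst_vars <;> ring
  simp only [hentry, ← Finset.mul_sum, Finset.sum_add_distrib, Finset.sum_sub_distrib,
    Finset.sum_ite_irrel, Finset.sum_const_zero, Finset.sum_ite_eq', Finset.mem_univ, if_true,
    hH _ i₀, add_sub_cancel_right]

/-- A bound for the norm of the matrix `divCoeff`, namely `d` times the bound for its entries. -/
def divCoeffBound (d : ℕ) (δ : ℝ) : ℝ := d * (3 * δ⁻¹ ^ 2)

namespace UniformlyElliptic

theorem divCoeff_row_self (ha : UniformlyElliptic δ a) (i₀ k : Fin d) (s s' : ℝ) :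
    divCoeff i₀ a s i₀ k = divCoeff i₀ a s' i₀ k := by
  obtain rfl | hk := eq_or_ne k i₀
  · simp [divCoeff, (ha.diag_pos _ _).ne']
  · simp [divCoeff, hk]

theorem divCoeff_add_smul_spaceDir (ha : UniformlyElliptic δ a) (i₀ j k : Fin d)
    (p : SpaceTime d) (s : ℝ) :
    divCoeff i₀ a ((p + s • spaceDir j).2 i₀) j k = divCoeff i₀ a (p.2 i₀) j k := by
  obtain rfl | hj := eq_or_ne j i₀
  · exact ha.divCoeff_row_self _ _ _ _
  · simp [spaceDir_snd_eq_zero_of_ne hj]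

theorem measurable_divCoeff (ha : UniformlyElliptic δ a) (i₀ j k : Fin d) :
    Measurable fun s => divCoeff i₀ a s j k := by
  have h : ∀ (P : Prop) [Decidable P] (l m : Fin d), Measurable fun s => if P then a s l m else 0 :=
    fun P _ l m => by by_cases hP : P <;> simp [hP, ha.measurable]
  exact (((ha.measurable j k).add (h _ _ _)).sub (h _ _ _)).div (ha.measurable i₀ i₀)

theorem abs_divCoeff_le (ha : UniformlyElliptic δ a) (i₀ : Fin d) (s : ℝ) (j k : Fin d) :
    |divCoeff i₀ a s j k| ≤ 3 * δ⁻¹ ^ 2 := by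
  have hδ : 0 ≤ δ⁻¹ := inv_nonneg.2 ha.pos.le
  have hite : ∀ (P : Prop) [Decidable P] (l m : Fin d), |if P then a s l m else 0| ≤ δ⁻¹ :=
    fun P _ l m => by split_ifs <;> simp [ha.abs_le, hδ]
  have hnum := (abs_sub _ _).trans (add_le_add ((abs_add_le _ _).trans
    (add_le_add (ha.abs_le s j k) (hite (k = i₀) i₀ j))) (hite (j = i₀) i₀ k))
  rw [divCoeff, div_eq_mul_inv, abs_mul]
  calc _ ≤ (δ⁻¹ + δ⁻¹ + δ⁻¹) * δ⁻¹ :=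
        mul_le_mul hnum (ha.abs_inv_diag_le s i₀) (abs_nonneg _) (by positivity)
    _ = 3 * δ⁻¹ ^ 2 := by ring

theorem le_sum_divCoeff_mul (ha : UniformlyElliptic δ a) (i₀ : Fin d) (s : ℝ) (ξ : Fin d → ℝ) :
    δ ^ 2 * ∑ j, ξ j ^ 2 ≤ ∑ j, ∑ k, divCoeff i₀ a s j k * (ξ j * ξ k) := by
  rw [sum_divCoeff_mul i₀ s fun j k => mul_comm (ξ j) (ξ k), sq, mul_assoc]
  simp only [← mul_assoc (a s _ _)]
  exact mul_le_mul (ha.le_inv_diag s i₀) (ha.lower s ξ)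
    (mul_nonneg ha.pos.le (Finset.sum_nonneg fun _ _ => sq_nonneg _))
    (ha.pos.le.trans (ha.le_inv_diag s i₀))

theorem abs_sum_divCoeff_mul_le (ha : UniformlyElliptic δ a) (i₀ : Fin d) (s : ℝ) {ε : ℝ}
    (hε : 0 < ε) (ζ ξ : Fin d → ℝ) :
    |∑ j, ∑ k, divCoeff i₀ a s j k * (ζ j * ξ k)| ≤
      ε * ∑ j, ζ j ^ 2 + divCoeffBound d δ ^ 2 / (4 * ε) * ∑ k, ξ k ^ 2 := by
  simpa only [divCoeffBound, Fintype.card_fin] using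
    abs_sum_sum_mul_le (ha.abs_divCoeff_le i₀ s) hε ζ ξ

end UniformlyElliptic

end Coefficients

section Energy

variable {d : ℕ} {δ t₀ : ℝ} {a : ℝ → Fin d → Fin d → ℝ} {i₀ : Fin d} {U K : Set (SpaceTime d)}
  {u w G ψ η : SpaceTime d → ℝ}

/-- The squared length `|∇_x u|²` of the space gradient. -/
def gradSq (u : SpaceTime d → ℝ) (p : SpaceTime d) : ℝ := ∑ i, dirDeriv (spaceDir i) u p ^ 2

theorem gradSq_nonneg (u : SpaceTime d → ℝ) : 0 ≤ gradSq u :=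
  fun _ => Finset.sum_nonneg fun _ _ => sq_nonneg _

theorem continuous_gradSq (hu : ContDiff ℝ ∞ u) : Continuous (gradSq u) :=
  continuous_finsetSum _ fun i _ => (continuous_dirDeriv hu (spaceDir i)).pow 2

theorem gradSq_eq_zero_of_notMem_tsupport {p : SpaceTime d} (hp : p ∉ tsupport u) :
    gradSq u p = 0 := by
  simp [gradSq, dirDeriv_eq_zero_of_notMem_tsupport hp]

theorem IsTestFunction.integrable_gradSq_mul {μ : Measure (SpaceTime d)}
    [IsFiniteMeasureOnCompacts μ] (hψ : IsTestFunction U ψ) (hu : Continuous u) :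
    Integrable (fun p => gradSq ψ p * u p) μ :=
  hψ.integrable_of_eq_zero ((continuous_gradSq hψ.contDiff).mul hu) fun p hp => by
    rw [gradSq_eq_zero_of_notMem_tsupport hp, zero_mul]

theorem gradSq_sq (hψ : ContDiff ℝ ∞ ψ) (p : SpaceTime d) :
    gradSq (fun q => ψ q ^ 2) p = 4 * ψ p ^ 2 * gradSq ψ p := by
  simp only [gradSq, dirDeriv_sq hψ, Finset.mul_sum]
  exact Finset.sum_congr rfl fun i _ => by ring

theorem dirDeriv_sq_mul (hψ : ContDiff ℝ ∞ ψ) (hu : ContDiff ℝ ∞ u) (v : SpaceTime d) :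
    dirDeriv v (fun q => ψ q ^ 2 * u q) =
      fun p => 2 * ψ p * dirDeriv v ψ p * u p + ψ p ^ 2 * dirDeriv v u p := by
  rw [dirDeriv_mul (hψ.pow 2) hu, dirDeriv_sq hψ]

theorem gradSq_sq_mul_le (hψ : ContDiff ℝ ∞ ψ) (hu : ContDiff ℝ ∞ u) (p : SpaceTime d) :
    gradSq (fun q => ψ q ^ 2 * u q) p ≤
      8 * (gradSq ψ p * (ψ p ^ 2 * u p ^ 2)) + 2 * ((ψ p ^ 2) ^ 2 * gradSq u p) := by
  simp only [gradSq, dirDeriv_sq_mul hψ hu, Finset.mul_sum, Finset.sum_mul,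
    ← Finset.sum_add_distrib]
  refine Finset.sum_le_sum fun i _ => add_sq_le.trans (le_of_eq ?_)
  ring

/-- The bilinear form `∑ A^{jk} G_{x^j} u_{x^k}` of the divergence-form operator with the
coefficients `divCoeff`. -/
def diffusionForm (i₀ : Fin d) (a : ℝ → Fin d → Fin d → ℝ) (G u : SpaceTime d → ℝ)
    (p : SpaceTime d) : ℝ :=
  ∑ j, ∑ k, divCoeff i₀ a (p.2 i₀) j k * (dirDeriv (spaceDir j) G p * dirDeriv (spaceDir k) u p)

theorem diffusionForm_eq_zero_of_notMem_tsupport {p : SpaceTime d} (hp : p ∉ tsupport G) :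
    diffusionForm i₀ a G u p = 0 := by
  simp [diffusionForm, dirDeriv_eq_zero_of_notMem_tsupport hp]

namespace UniformlyElliptic

theorem measurable_inv_diag (ha : UniformlyElliptic δ a) (i₀ : Fin d) :
    Measurable fun x : Fin d → ℝ => (a (x i₀) i₀ i₀)⁻¹ :=
  ((ha.measurable i₀ i₀).comp (measurable_pi_apply i₀)).inv

theorem measurable_divCoeff_comp_snd (ha : UniformlyElliptic δ a) (i₀ j k : Fin d) :
    Measurable fun p : SpaceTime d => divCoeff i₀ a (p.2 i₀) j k :=
  (ha.measurable_divCoeff i₀ j k).comp ((measurable_pi_apply i₀).comp measurable_snd)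

theorem integrable_diffusionForm {μ : Measure (SpaceTime d)} [IsFiniteMeasureOnCompacts μ]
    (ha : UniformlyElliptic δ a) (hG : IsTestFunction U G) (hu : ContDiff ℝ ∞ u) :
    Integrable (diffusionForm i₀ a G u) μ :=
  integrable_finsetSum _ fun j _ => integrable_finsetSum _ fun k _ =>
    (hG.dirDeriv (spaceDir j)).integrable_bdd_mul_mul (continuous_dirDeriv hu (spaceDir k))
      (ha.measurable_divCoeff_comp_snd i₀ j k) fun p => ha.abs_divCoeff_le i₀ (p.2 i₀) j k

theorem abs_diffusionForm_le (ha : UniformlyElliptic δ a) {ε : ℝ} (hε : 0 < ε) (p : SpaceTime d) :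
    |diffusionForm i₀ a G u p| ≤
      ε * gradSq G p + divCoeffBound d δ ^ 2 / (4 * ε) * gradSq u p :=
  ha.abs_sum_divCoeff_mul_le i₀ (p.2 i₀) hε _ _

theorem le_diffusionForm_sq_mul (ha : UniformlyElliptic δ a) (hψ : ContDiff ℝ ∞ ψ)
    (hu : ContDiff ℝ ∞ u) (p : SpaceTime d) :
    δ ^ 2 / 2 * (ψ p ^ 2 * gradSq u p) -
        2 * divCoeffBound d δ ^ 2 / δ ^ 2 * (gradSq ψ p * u p ^ 2) ≤
      diffusionForm i₀ a (fun q => ψ q ^ 2 * u q) u p := by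
  have hd : (0 : ℝ) < d := Nat.cast_pos.2 (Fin.pos i₀)
  have hδ := ha.pos
  have hM : 0 < divCoeffBound d δ := by unfold divCoeffBound; positivity
  set ξ : Fin d → ℝ := fun k => dirDeriv (spaceDir k) u p
  set ζ : Fin d → ℝ := fun j => dirDeriv (spaceDir j) ψ p
  have hsplit : diffusionForm i₀ a (fun q => ψ q ^ 2 * u q) u p =
      ψ p ^ 2 * ∑ j, ∑ k, divCoeff i₀ a (p.2 i₀) j k * (ξ j * ξ k) +
        ∑ j, ∑ k, divCoeff i₀ a (p.2 i₀) j k * (2 * u p * ζ j * (ψ p * ξ k)) := by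
    simp only [diffusionForm, dirDeriv_sq_mul hψ hu, Finset.mul_sum, ← Finset.sum_add_distrib]
    exact Finset.sum_congr rfl fun j _ => Finset.sum_congr rfl fun k _ => by ring
  have hmain := mul_le_mul_of_nonneg_left (ha.le_sum_divCoeff_mul i₀ (p.2 i₀) ξ) (sq_nonneg (ψ p))
  have hcross := neg_le_of_abs_le (ha.abs_sum_divCoeff_mul_le i₀ (p.2 i₀)
    (ε := divCoeffBound d δ ^ 2 / (2 * δ ^ 2)) (by positivity) (fun j => 2 * u p * ζ j)
    fun k => ψ p * ξ k)
  simp only [mul_pow _ (ζ _), mul_pow _ (ξ _), ← Finset.mul_sum] at hcross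
  have hε : divCoeffBound d δ ^ 2 / (4 * (divCoeffBound d δ ^ 2 / (2 * δ ^ 2))) = δ ^ 2 / 2 := by
    field_simp
    norm_num
  rw [hε] at hcross
  rw [hsplit]
  change δ ^ 2 / 2 * (ψ p ^ 2 * ∑ k, ξ k ^ 2) - _ * ((∑ j, ζ j ^ 2) * u p ^ 2) ≤ _
  linear_combination hmain + hcross

theorem integral_diffusionForm_le (ha : UniformlyElliptic δ a) {μ : Measure (SpaceTime d)}
    [IsFiniteMeasureOnCompacts μ] (hK : IsCompact K) (hG : IsTestFunction K G)
    (hu : ContDiff ℝ ∞ u) {ε : ℝ} (hε : 0 < ε) :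
    ∫ p, diffusionForm i₀ a G u p ∂μ ≤
      ε * ∫ p, gradSq G p ∂μ + divCoeffBound d δ ^ 2 / (4 * ε) * ∫ p in K, gradSq u p ∂μ := by
  have hgradG : Integrable (gradSq G) μ := by
    simpa using hG.integrable_gradSq_mul (u := 1) continuous_const
  have hgradu : IntegrableOn (gradSq u) K μ :=
    (continuous_gradSq hu).continuousOn.integrableOn_compact hK
  rw [← setIntegral_eq_integral_of_forall_compl_eq_zero (s := K) fun p hp =>
    diffusionForm_eq_zero_of_notMem_tsupport fun h => hp (hG.tsupport_subset h)]
  calc ∫ p in K, diffusionForm i₀ a G u p ∂μ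
      ≤ ∫ p in K, (ε * gradSq G p + divCoeffBound d δ ^ 2 / (4 * ε) * gradSq u p) ∂μ :=
        integral_mono (ha.integrable_diffusionForm hG hu).integrableOn
          ((hgradG.integrableOn.const_mul _).add (hgradu.const_mul _))
          fun p => (le_abs_self _).trans (ha.abs_diffusionForm_le hε p)
    _ = ε * ∫ p in K, gradSq G p ∂μ +
          divCoeffBound d δ ^ 2 / (4 * ε) * ∫ p in K, gradSq u p ∂μ := by
        rw [integral_add (hgradG.integrableOn.const_mul _) (hgradu.const_mul _),
          integral_const_mul, integral_const_mul]
    _ ≤ _ := by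
        gcongr
        · exact .of_forall (gradSq_nonneg G)
        · exact Measure.restrict_le_self

end UniformlyElliptic

theorem sum_divCoeff_mul_dirDeriv_mul (hG : ContDiff ℝ ∞ G) (hu : ContDiff ℝ ∞ u)
    (p : SpaceTime d) :
    ∑ j, ∑ k, divCoeff i₀ a (p.2 i₀) j k *
        dirDeriv (spaceDir j) (fun q => G q * dirDeriv (spaceDir k) u q) p =
      diffusionForm i₀ a G u p + G p * ((a (p.2 i₀) i₀ i₀)⁻¹ * ∑ j, ∑ k, a (p.2 i₀) j k *
        dirDeriv (spaceDir j) (dirDeriv (spaceDir k) u) p) := by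
  rw [← sum_divCoeff_mul i₀ (p.2 i₀) fun j k => by rw [dirDeriv_comm hu]]
  simp only [dirDeriv_mul hG (contDiff_dirDeriv hu _), diffusionForm, mul_add,
    Finset.sum_add_distrib, Finset.mul_sum, mul_left_comm (G p)]

/-- `u` is smooth everywhere and solves `u_t + ∑ a^{jk}(x^{i₀}) u_{x^j x^k} = 0` at the points of
`U` with `t > t₀`. Solutions in `U` alone are brought to this form by a cutoff. -/
structure IsSolutionAfter (i₀ : Fin d) (t₀ : ℝ) (a : ℝ → Fin d → Fin d → ℝ)
    (U : Set (SpaceTime d)) (u : SpaceTime d → ℝ) : Prop where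
  contDiff : ContDiff ℝ ∞ u
  eqn : ∀ p ∈ U, t₀ < p.1 → dirDeriv (timeDir d) u p +
    ∑ j, ∑ k, a (p.2 i₀) j k * dirDeriv (spaceDir j) (dirDeriv (spaceDir k) u) p = 0

namespace IsSolutionAfter

protected theorem dirDeriv (hu : IsSolutionAfter i₀ t₀ a U u) (hU : IsOpen U) {v : SpaceTime d}
    (hv : v.2 i₀ = 0) : IsSolutionAfter i₀ t₀ a U (dirDeriv v u) := by
  have hsmooth := hu.contDiff
  refine ⟨contDiff_dirDeriv hsmooth v, fun p hpU hp => ?_⟩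
  have hcomm : ∀ j k, dirDeriv (spaceDir j) (dirDeriv (spaceDir k) (dirDeriv v u)) =
      dirDeriv v (dirDeriv (spaceDir j) (dirDeriv (spaceDir k) u)) := fun j k => by
    rw [dirDeriv_comm hsmooth _ v, dirDeriv_comm (contDiff_dirDeriv hsmooth _) _ v]
  simp only [dirDeriv_comm hsmooth (timeDir d) v, hcomm]
  have hline := HasDerivAt.add
    (hasLineDerivAt_dirDeriv (contDiff_dirDeriv hsmooth (timeDir d)) v p)
    (.fun_sum fun j (_ : j ∈ Finset.univ) => .fun_sum fun k (_ : k ∈ Finset.univ) =>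
      (hasLineDerivAt_dirDeriv (contDiff_dirDeriv (contDiff_dirDeriv hsmooth (spaceDir k))
        (spaceDir j)) v p).const_mul (a (p.2 i₀) j k))
  refine hline.unique ((hasDerivAt_const (0 : ℝ) (0 : ℝ)).congr_of_eventuallyEq ?_)
  have hopen : IsOpen (U ∩ {q | t₀ < q.1}) := hU.inter (isOpen_lt continuous_const continuous_fst)
  have hnear : ∀ᶠ s in 𝓝 (0 : ℝ), p + s • v ∈ U ∩ {q | t₀ < q.1} :=
    (by fun_prop : Continuous fun s : ℝ => p + s • v).continuousAt.eventually_mem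
      (hopen.mem_nhds (by simpa using ⟨hpU, hp⟩))
  filter_upwards [hnear] with s hs
  simpa [hv] using hu.eqn _ hs.1 hs.2

-- No derivative falls on the coefficients because `divCoeff` is constant along `x^j` in row `j`.
theorem integral_eq_integral_diffusionForm (hu : IsSolutionAfter i₀ t₀ a U u)
    (ha : UniformlyElliptic δ a) (hG : IsTestFunction U G) :
    ∫ p, (a (p.2 i₀) i₀ i₀)⁻¹ * (G p * dirDeriv (timeDir d) u p) ∂(volumeAfter d t₀) =
      ∫ p, diffusionForm i₀ a G u p ∂(volumeAfter d t₀) := by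
  have hflux : ∀ k, IsTestFunction U fun p => G p * dirDeriv (spaceDir k) u p := fun k =>
    hG.mul_right (contDiff_dirDeriv hu.contDiff _)
  have hpoint : ∀ p, t₀ < p.1 → (a (p.2 i₀) i₀ i₀)⁻¹ * (G p * dirDeriv (timeDir d) u p) =
      diffusionForm i₀ a G u p - ∑ j, ∑ k, divCoeff i₀ a (p.2 i₀) j k *
        dirDeriv (spaceDir j) (fun p => G p * dirDeriv (spaceDir k) u p) p := by
    intro p hp
    rw [sum_divCoeff_mul_dirDeriv_mul hG.contDiff hu.contDiff]
    by_cases hpG : p ∈ tsupport G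
    · linear_combination (a (p.2 i₀) i₀ i₀)⁻¹ * G p * hu.eqn p (hG.tsupport_subset hpG) hp
    · simp [image_eq_zero_of_notMem_tsupport hpG]
  have hint : ∀ j k, Integrable (fun p : SpaceTime d => divCoeff i₀ a (p.2 i₀) j k *
      dirDeriv (spaceDir j) (fun p => G p * dirDeriv (spaceDir k) u p) p) (volumeAfter d t₀) :=
    fun j k => by
      simpa using ((hflux k).dirDeriv (spaceDir j)).integrable_bdd_mul_mul (F := 1)
        continuous_const (ha.measurable_divCoeff_comp_snd i₀ j k)
        fun p => ha.abs_divCoeff_le i₀ (p.2 i₀) j k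
  have hsum := integrable_finsetSum Finset.univ fun j _ =>
    integrable_finsetSum Finset.univ fun k _ => hint j k
  calc _ = ∫ p, (diffusionForm i₀ a G u p - ∑ j, ∑ k, divCoeff i₀ a (p.2 i₀) j k *
        dirDeriv (spaceDir j) (fun p => G p * dirDeriv (spaceDir k) u p) p) ∂(volumeAfter d t₀) :=
        setIntegral_congr_fun (measurableSet_after t₀) hpoint
    _ = _ := by
        rw [integral_sub (ha.integrable_diffusionForm hG hu.contDiff) hsum, sub_eq_self,
          integral_finsetSum _ fun j _ => integrable_finsetSum _ fun k _ => hint j k]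
        refine Finset.sum_eq_zero fun j _ => ?_
        rw [integral_finsetSum _ fun k _ => hint j k]
        exact Finset.sum_eq_zero fun k _ =>
          (hflux k).integral_volumeAfter_mul_dirDeriv_spaceDir_eq_zero
            (ha.measurable_divCoeff_comp_snd i₀ j k)
            (fun p => ha.abs_divCoeff_le i₀ (p.2 i₀) j k)
            (ha.divCoeff_add_smul_spaceDir i₀ j k) t₀

end IsSolutionAfter

/-- The weight `W` in the Caccioppoli inequality `∫ ψ² |∇u|² ≤ ∫ W u²`. -/
def caccioppoliWeight (δ : ℝ) (ψ : SpaceTime d → ℝ) (p : SpaceTime d) : ℝ :=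
  2 / δ ^ 2 * (δ⁻¹ * |ψ p * dirDeriv (timeDir d) ψ p| +
    2 * divCoeffBound d δ ^ 2 / δ ^ 2 * gradSq ψ p)

theorem continuous_caccioppoliWeight (hψ : ContDiff ℝ ∞ ψ) :
    Continuous (caccioppoliWeight δ ψ) := by
  have hcont := hψ.continuous
  have hdt := continuous_dirDeriv hψ (timeDir d)
  have hgrad := continuous_gradSq hψ
  unfold caccioppoliWeight
  fun_prop

theorem caccioppoliWeight_eq_zero_of_notMem_tsupport {p : SpaceTime d} (hp : p ∉ tsupport ψ) :
    caccioppoliWeight δ ψ p = 0 := by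
  simp [caccioppoliWeight, image_eq_zero_of_notMem_tsupport hp,
    gradSq_eq_zero_of_notMem_tsupport hp]

theorem IsTestFunction.integrable_caccioppoliWeight_mul {μ : Measure (SpaceTime d)}
    [IsFiniteMeasureOnCompacts μ] (hψ : IsTestFunction U ψ) (hu : Continuous u) :
    Integrable (fun p => caccioppoliWeight δ ψ p * u p) μ :=
  hψ.integrable_of_eq_zero ((continuous_caccioppoliWeight hψ.contDiff).mul hu) fun p hp => by
    rw [caccioppoliWeight_eq_zero_of_notMem_tsupport hp, zero_mul]

theorem caccioppoliWeight_sq_le (hδ : 0 < δ) (hψ : ContDiff ℝ ∞ ψ) (p : SpaceTime d) :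
    caccioppoliWeight δ (fun q => ψ q ^ 2) p ≤ 4 * ψ p ^ 2 * caccioppoliWeight δ ψ p := by
  have hgrad : gradSq (fun q => ψ q ^ 2) p = 4 * ψ p ^ 2 * gradSq ψ p := gradSq_sq hψ p
  have htime : ψ p ^ 2 * (2 * ψ p * dirDeriv (timeDir d) ψ p) =
      2 * ψ p ^ 2 * (ψ p * dirDeriv (timeDir d) ψ p) := by ring
  have hspare : 0 ≤ 2 / δ ^ 2 * (δ⁻¹ * (2 * ψ p ^ 2 * |ψ p * dirDeriv (timeDir d) ψ p|)) := by
    positivity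
  simp only [caccioppoliWeight, hgrad, dirDeriv_sq hψ, htime]
  rw [abs_mul, abs_of_nonneg (by positivity : 0 ≤ 2 * ψ p ^ 2)]
  linarith

namespace IsSolutionAfter

theorem integral_sq_mul_gradSq_le (hu : IsSolutionAfter i₀ t₀ a U u) (ha : UniformlyElliptic δ a)
    (hψ : IsTestFunction U ψ) :
    ∫ p, ψ p ^ 2 * gradSq u p ∂(volumeAfter d t₀) ≤
      ∫ p, caccioppoliWeight δ ψ p * u p ^ 2 ∂(volumeAfter d t₀) := by
  have hδ := ha.pos
  have hgradu := continuous_gradSq hu.contDiff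
  have hψu : IsTestFunction U fun p => ψ p ^ 2 * u p := hψ.sq.mul_right hu.contDiff
  have hcu := hu.contDiff.continuous
  have hintgrad : Integrable (fun p => ψ p ^ 2 * gradSq u p) (volumeAfter d t₀) :=
    hψ.sq.integrable_mul hgradu
  have hintcross : Integrable (fun p => gradSq ψ p * u p ^ 2) (volumeAfter d t₀) :=
    hψ.integrable_gradSq_mul (hcu.pow 2)
  have hinttime : Integrable (fun p => |ψ p * dirDeriv (timeDir d) ψ p| * u p ^ 2)
      (volumeAfter d t₀) := by
    have := hψ.contDiff.continuous
    have := continuous_dirDeriv hψ.contDiff (timeDir d)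
    exact hψ.integrable_of_eq_zero (by fun_prop) fun p hp => by
      simp [image_eq_zero_of_notMem_tsupport hp]
  have hlower := integral_mono ((hintgrad.const_mul _).sub (hintcross.const_mul _))
    (ha.integrable_diffusionForm hψu hu.contDiff)
    (ha.le_diffusionForm_sq_mul (i₀ := i₀) hψ.contDiff hu.contDiff)
  simp only [Pi.sub_apply] at hlower
  rw [integral_sub (hintgrad.const_mul _) (hintcross.const_mul _), integral_const_mul,
    integral_const_mul, ← hu.integral_eq_integral_diffusionForm ha hψu] at hlower
  have hupper := hψ.integral_volumeAfter_mul_sq_mul_dirDeriv_timeDir_le hu.contDiff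
    (ha.measurable_inv_diag i₀) (fun x => ha.abs_inv_diag_le (x i₀) i₀)
    (fun x => (inv_pos.2 (ha.diag_pos (x i₀) i₀)).le) t₀
  have hweight : ∫ p, caccioppoliWeight δ ψ p * u p ^ 2 ∂(volumeAfter d t₀) = 2 / δ ^ 2 *
      (δ⁻¹ * ∫ p, |ψ p * dirDeriv (timeDir d) ψ p| * u p ^ 2 ∂(volumeAfter d t₀) +
        2 * divCoeffBound d δ ^ 2 / δ ^ 2 * ∫ p, gradSq ψ p * u p ^ 2 ∂(volumeAfter d t₀)) := by
    rw [← integral_const_mul δ⁻¹, ← integral_const_mul (2 * divCoeffBound d δ ^ 2 / δ ^ 2),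
      ← integral_add (hinttime.const_mul _) (hintcross.const_mul _), ← integral_const_mul]
    simp only [caccioppoliWeight, add_mul, mul_assoc]
  rw [hweight, div_mul_eq_mul_div, le_div_iff₀ (by positivity)]
  linarith

theorem integral_sq_sq_mul_gradSq_le (hu : IsSolutionAfter i₀ t₀ a U u)
    (ha : UniformlyElliptic δ a) (hψ : IsTestFunction U ψ) :
    ∫ p, (ψ p ^ 2) ^ 2 * gradSq u p ∂(volumeAfter d t₀) ≤
      4 * ∫ p, caccioppoliWeight δ ψ p * (ψ p ^ 2 * u p ^ 2) ∂(volumeAfter d t₀) := by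
  have hcψ := hψ.contDiff.continuous
  have hcu := hu.contDiff.continuous
  refine (hu.integral_sq_mul_gradSq_le ha hψ.sq).trans ?_
  rw [← integral_const_mul]
  refine integral_mono (hψ.sq.integrable_caccioppoliWeight_mul (hcu.pow 2))
    ((hψ.integrable_caccioppoliWeight_mul (by fun_prop)).const_mul 4) fun p => ?_
  have hle := mul_le_mul_of_nonneg_right (caccioppoliWeight_sq_le ha.pos hψ.contDiff p)
    (sq_nonneg (u p))
  linarith

end IsSolutionAfter

variable (i₀) in
theorem exists_integral_gradSq_sq_mul_le (hη : IsTestFunction U η) :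
    ∃ C : ℝ, 0 ≤ C ∧ ∀ t₀ a w, UniformlyElliptic δ a → IsSolutionAfter i₀ t₀ a U w →
      ∫ p, gradSq (fun q => η q ^ 2 * w q) p ∂(volumeAfter d t₀) ≤
        C * ∫ p, η p ^ 2 * w p ^ 2 ∂(volumeAfter d t₀) := by
  obtain ⟨C, hC, hbound⟩ := exists_integral_mul_le_mul_setIntegral
    (g := fun p => 8 * gradSq η p + 8 * caccioppoliWeight δ η p)
    (((continuous_gradSq hη.contDiff).const_mul _).add
      ((continuous_caccioppoliWeight hη.contDiff).const_mul _))
    hη.hasCompactSupport fun p hp => by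
      simp [gradSq_eq_zero_of_notMem_tsupport hp, caccioppoliWeight_eq_zero_of_notMem_tsupport hp]
  refine ⟨C, hC, fun t₀ a w ha hw => ?_⟩
  have hcη := hη.contDiff.continuous
  have hcw := hw.contDiff.continuous
  have hcF : Continuous fun p => η p ^ 2 * w p ^ 2 := by fun_prop
  have hintgrad : Integrable (fun p => (η p ^ 2) ^ 2 * gradSq w p) (volumeAfter d t₀) :=
    hη.sq.sq.integrable_mul (continuous_gradSq hw.contDiff)
  have hintcut : Integrable (fun p => gradSq η p * (η p ^ 2 * w p ^ 2)) (volumeAfter d t₀) :=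
    hη.integrable_gradSq_mul hcF
  have hintweight : Integrable (fun p => caccioppoliWeight δ η p * (η p ^ 2 * w p ^ 2))
      (volumeAfter d t₀) := hη.integrable_caccioppoliWeight_mul hcF
  calc ∫ p, gradSq (fun q => η q ^ 2 * w q) p ∂(volumeAfter d t₀)
      ≤ ∫ p, (8 * (gradSq η p * (η p ^ 2 * w p ^ 2)) + 2 * ((η p ^ 2) ^ 2 * gradSq w p))
          ∂(volumeAfter d t₀) :=
        integral_mono_of_nonneg (.of_forall (gradSq_nonneg _))
          ((hintcut.const_mul _).add (hintgrad.const_mul _))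
          (.of_forall (gradSq_sq_mul_le hη.contDiff hw.contDiff))
    _ ≤ ∫ p, (8 * gradSq η p + 8 * caccioppoliWeight δ η p) * (η p ^ 2 * w p ^ 2)
          ∂(volumeAfter d t₀) := by
        simp only [add_mul, mul_assoc]
        rw [integral_add (hintcut.const_mul _) (hintgrad.const_mul _),
          integral_add (hintcut.const_mul _) (hintweight.const_mul _), integral_const_mul,
          integral_const_mul, integral_const_mul]
        linarith [hw.integral_sq_sq_mul_gradSq_le ha hη]
    _ ≤ C * ∫ p in tsupport η, η p ^ 2 * w p ^ 2 ∂(volumeAfter d t₀) :=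
        hbound _ _ hcF fun p => by positivity
    _ ≤ _ := mul_le_mul_of_nonneg_left
        (setIntegral_le_integral (hη.sq.integrable_mul (hcw.pow 2))
          (.of_forall fun p => by positivity)) hC

variable (i₀) in
theorem exists_integral_sq_mul_dirDeriv_timeDir_sq_le (hδ : 0 < δ) (hU : IsOpen U)
    (hη : IsTestFunction U η) :
    ∃ C : ℝ, 0 ≤ C ∧ ∀ t₀ a u, UniformlyElliptic δ a → IsSolutionAfter i₀ t₀ a U u →
      ∫ p, η p ^ 2 * dirDeriv (timeDir d) u p ^ 2 ∂(volumeAfter d t₀) ≤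
        C * ∫ p in tsupport η, gradSq u p ∂(volumeAfter d t₀) := by
  obtain ⟨C, hC, hgrad⟩ := exists_integral_gradSq_sq_mul_le (δ := δ) i₀ hη
  set ε := δ / (2 * (C + 1)) with hε
  have hεpos : 0 < ε := by positivity
  have hεC : ε * C ≤ δ / 2 := by
    rw [hε, div_mul_eq_mul_div, div_le_div_iff₀ (by positivity) two_pos]
    nlinarith
  refine ⟨2 / δ * (divCoeffBound d δ ^ 2 / (4 * ε)), by positivity, fun t₀ a u ha hu => ?_⟩
  set w := dirDeriv (timeDir d) u
  have hw : IsSolutionAfter i₀ t₀ a U w := hu.dirDeriv hU rfl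
  have hη' : IsTestFunction (tsupport η) η := { hη with tsupport_subset := subset_rfl }
  have hG := hη.sq.mul_right hw.contDiff
  have hlower : δ * ∫ p, η p ^ 2 * w p ^ 2 ∂(volumeAfter d t₀) ≤
      ∫ p, (a (p.2 i₀) i₀ i₀)⁻¹ * (η p ^ 2 * w p * w p) ∂(volumeAfter d t₀) := by
    rw [← integral_const_mul]
    refine integral_mono ((hη.sq.integrable_mul (hw.contDiff.continuous.pow 2)).const_mul δ)
      (hG.integrable_bdd_mul_mul hw.contDiff.continuous
        ((ha.measurable_inv_diag i₀).comp measurable_snd)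
        fun p => ha.abs_inv_diag_le (p.2 i₀) i₀) fun p => ?_
    have hnonneg : 0 ≤ η p ^ 2 * w p ^ 2 := by positivity
    simpa only [mul_assoc, sq] using mul_le_mul_of_nonneg_right (ha.le_inv_diag (p.2 i₀) i₀) hnonneg
  have hupper := ha.integral_diffusionForm_le (i₀ := i₀) (μ := volumeAfter d t₀)
    hη.hasCompactSupport (hη'.sq.mul_right hw.contDiff) hu.contDiff hεpos
  rw [hu.integral_eq_integral_diffusionForm ha hG] at hlower
  have habsorb := mul_le_mul_of_nonneg_left (hgrad t₀ a w ha hw) hεpos.le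
  have hnonneg : 0 ≤ ∫ p, η p ^ 2 * w p ^ 2 ∂(volumeAfter d t₀) :=
    integral_nonneg fun p => by positivity
  have habsorb' := mul_le_mul_of_nonneg_right hεC hnonneg
  rw [mul_assoc, div_mul_eq_mul_div, le_div_iff₀ hδ]
  linarith

end Energy

section InteriorEstimates

variable {d : ℕ} {δ t₀ : ℝ} {i₀ : Fin d} {a : ℝ → Fin d → Fin d → ℝ} {U : Set (SpaceTime d)}
  {u ψ F : SpaceTime d → ℝ} {v : SpaceTime d} {L M : List (SpaceTime d)}

/-- The functional `Φ t₀ u` of solutions `u` is bounded by the squared `L²` norm of `u` over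
`K ∩ {t > t₀}` for some compact `K ⊆ U`, where `K` and the constant depend neither on `t₀` nor on
the coefficients. -/
def L2Bounded (δ : ℝ) (i₀ : Fin d) (U : Set (SpaceTime d))
    (Φ : ℝ → (SpaceTime d → ℝ) → ℝ) : Prop :=
  ∃ C : ℝ, 0 ≤ C ∧ ∃ K, IsCompact K ∧ K ⊆ U ∧
    ∀ t₀ a u, UniformlyElliptic δ a → IsSolutionAfter i₀ t₀ a U u →
      Φ t₀ u ≤ C * ∫ p in K, u p ^ 2 ∂(volumeAfter d t₀)

namespace L2Bounded

variable {Φ Ψ : ℝ → (SpaceTime d → ℝ) → ℝ}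

theorem mono (hΨ : L2Bounded δ i₀ U Ψ) (hle : ∀ t₀ a u, UniformlyElliptic δ a →
    IsSolutionAfter i₀ t₀ a U u → Φ t₀ u ≤ Ψ t₀ u) : L2Bounded δ i₀ U Φ := by
  obtain ⟨C, hC, K, hK, hKU, hbound⟩ := hΨ
  exact ⟨C, hC, K, hK, hKU, fun t₀ a u ha hu =>
    (hle t₀ a u ha hu).trans (hbound t₀ a u ha hu)⟩

theorem const_mul (hΦ : L2Bounded δ i₀ U Φ) {c : ℝ} (hc : 0 ≤ c) :
    L2Bounded δ i₀ U fun t₀ u => c * Φ t₀ u := by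
  obtain ⟨C, hC, K, hK, hKU, hbound⟩ := hΦ
  refine ⟨c * C, by positivity, K, hK, hKU, fun t₀ a u ha hu => ?_⟩
  rw [mul_assoc]
  exact mul_le_mul_of_nonneg_left (hbound t₀ a u ha hu) hc

theorem add (hΦ : L2Bounded δ i₀ U Φ) (hΨ : L2Bounded δ i₀ U Ψ) :
    L2Bounded δ i₀ U fun t₀ u => Φ t₀ u + Ψ t₀ u := by
  obtain ⟨C, hC, K, hK, hKU, hbound⟩ := hΦ
  obtain ⟨C', hC', K', hK', hKU', hbound'⟩ := hΨ
  refine ⟨C + C', by positivity, K ∪ K', hK.union hK', union_subset hKU hKU',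
    fun t₀ a u ha hu => ?_⟩
  have hmono : ∀ S ⊆ K ∪ K', ∫ p in S, u p ^ 2 ∂(volumeAfter d t₀) ≤
      ∫ p in K ∪ K', u p ^ 2 ∂(volumeAfter d t₀) := fun S hS =>
    setIntegral_mono_set
      ((hu.contDiff.continuous.pow 2).continuousOn.integrableOn_compact (hK.union hK'))
      (.of_forall fun p => sq_nonneg (u p)) (.of_forall hS)
  rw [add_mul]
  exact add_le_add
    ((hbound t₀ a u ha hu).trans (mul_le_mul_of_nonneg_left (hmono K subset_union_left) hC))
    ((hbound' t₀ a u ha hu).trans (mul_le_mul_of_nonneg_left (hmono K' subset_union_right) hC'))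

theorem sum {ι : Type*} {s : Finset ι} {Φ : ι → ℝ → (SpaceTime d → ℝ) → ℝ}
    (hΦ : ∀ i ∈ s, L2Bounded δ i₀ U (Φ i)) : L2Bounded δ i₀ U fun t₀ u => ∑ i ∈ s, Φ i t₀ u := by
  classical
  induction s using Finset.induction_on with
  | empty => exact ⟨0, le_rfl, ∅, isCompact_empty, empty_subset _, fun _ _ _ _ _ => by simp⟩
  | insert i s hi ih =>
    simp only [Finset.sum_insert hi]
    exact (hΦ i (Finset.mem_insert_self i s)).add
      (ih fun j hj => hΦ j (Finset.mem_insert_of_mem hj))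

end L2Bounded

/-- The `L²` norm over any compact part of `U` of the derivative of a solution along `L` is bounded
by an `L²` norm of the solution, uniformly in the coefficients and in `t₀`. -/
def L2Controlled (δ : ℝ) (i₀ : Fin d) (U : Set (SpaceTime d)) (L : List (SpaceTime d)) : Prop :=
  ∀ K, IsCompact K → K ⊆ U →
    L2Bounded δ i₀ U fun t₀ u => ∫ p in K, iterDirDeriv L u p ^ 2 ∂(volumeAfter d t₀)

theorem l2Controlled_nil : L2Controlled δ i₀ U [] := fun K hK hKU =>
  ⟨1, zero_le_one, K, hK, hKU, fun _ _ _ _ _ => (one_mul _).ge⟩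

theorem L2Controlled.cons (hL : L2Controlled δ i₀ U L) (hv : L2Controlled δ i₀ U [v])
    (hU : IsOpen U) (hvi₀ : v.2 i₀ = 0) : L2Controlled δ i₀ U (v :: L) := by
  intro K hK hKU
  obtain ⟨C, hC, K', hK', hKU', hbound⟩ := hL K hK hKU
  exact ((hv K' hK' hKU').const_mul hC).mono fun t₀ a u ha hu =>
    hbound t₀ a (dirDeriv v u) ha (hu.dirDeriv hU hvi₀)

theorem L2Controlled.swap {v w : SpaceTime d} (hvw : L2Controlled δ i₀ U [v, w]) :
    L2Controlled δ i₀ U [w, v] := fun K hK hKU =>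
  (hvw K hK hKU).mono fun t₀ a u _ hu => by
    change ∫ p in K, dirDeriv v (dirDeriv w u) p ^ 2 ∂(volumeAfter d t₀) ≤ _
    rw [dirDeriv_comm hu.contDiff]
    rfl

theorem l2Bounded_setIntegral_gradSq (hU : IsOpen U) {K : Set (SpaceTime d)} (hK : IsCompact K)
    (hKU : K ⊆ U) :
    L2Bounded δ i₀ U fun t₀ u => ∫ p in K, gradSq u p ∂(volumeAfter d t₀) := by
  obtain ⟨η, hη, hηK⟩ := exists_isTestFunction_eq_one_on hK hU hKU
  obtain ⟨C, hC, hbound⟩ := exists_integral_mul_le_mul_setIntegral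
    (continuous_caccioppoliWeight (δ := δ) hη.contDiff) hη.hasCompactSupport fun p hp =>
      caccioppoliWeight_eq_zero_of_notMem_tsupport hp
  refine ⟨C, hC, tsupport η, hη.hasCompactSupport, hη.tsupport_subset, fun t₀ a u ha hu => ?_⟩
  calc ∫ p in K, gradSq u p ∂(volumeAfter d t₀)
      ≤ ∫ p, η p ^ 2 * gradSq u p ∂(volumeAfter d t₀) :=
        hη.setIntegral_le_integral_sq_mul hK.measurableSet hηK (continuous_gradSq hu.contDiff)
          (gradSq_nonneg u)
    _ ≤ ∫ p, caccioppoliWeight δ η p * u p ^ 2 ∂(volumeAfter d t₀) :=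
        hu.integral_sq_mul_gradSq_le ha hη
    _ ≤ C * ∫ p in tsupport η, u p ^ 2 ∂(volumeAfter d t₀) :=
        hbound _ _ (hu.contDiff.continuous.pow 2) fun p => sq_nonneg (u p)

theorem l2Controlled_spaceDir (hU : IsOpen U) (i : Fin d) : L2Controlled δ i₀ U [spaceDir i] :=
  fun _ hK hKU => (l2Bounded_setIntegral_gradSq hU hK hKU).mono fun _ _ u _ hu =>
    setIntegral_mono_on
      (((continuous_dirDeriv hu.contDiff _).pow 2).continuousOn.integrableOn_compact hK)
      ((continuous_gradSq hu.contDiff).continuousOn.integrableOn_compact hK) hK.measurableSet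
      fun p _ => Finset.single_le_sum (f := fun j => dirDeriv (spaceDir j) u p ^ 2)
        (fun _ _ => sq_nonneg _) (Finset.mem_univ i)

theorem l2Controlled_timeDir (hδ : 0 < δ) (hU : IsOpen U) : L2Controlled δ i₀ U [timeDir d] := by
  intro K hK hKU
  obtain ⟨η, hη, hηK⟩ := exists_isTestFunction_eq_one_on hK hU hKU
  obtain ⟨C, hC, hbound⟩ := exists_integral_sq_mul_dirDeriv_timeDir_sq_le i₀ hδ hU hη
  refine ((l2Bounded_setIntegral_gradSq hU hη.hasCompactSupport hη.tsupport_subset).const_mul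
    hC).mono fun t₀ a u ha hu => ?_
  exact (hη.setIntegral_le_integral_sq_mul hK.measurableSet hηK
    ((continuous_dirDeriv hu.contDiff _).pow 2) fun p => sq_nonneg _).trans (hbound t₀ a u ha hu)

theorem l2Controlled_spaceDir_spaceDir_of_ne (hU : IsOpen U) {j k : Fin d}
    (hjk : (j, k) ≠ (i₀, i₀)) : L2Controlled δ i₀ U [spaceDir j, spaceDir k] := by
  by_cases hj : j = i₀
  · have hk : k ≠ i₀ := fun hk => hjk (by rw [hj, hk])
    exact ((l2Controlled_spaceDir hU j).cons (l2Controlled_spaceDir hU k) hU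
      (spaceDir_snd_eq_zero_of_ne hk)).swap
  · exact (l2Controlled_spaceDir hU k).cons (l2Controlled_spaceDir hU j) hU
      (spaceDir_snd_eq_zero_of_ne hj)

theorem IsSolutionAfter.sq_dirDeriv_normal_le (hu : IsSolutionAfter i₀ t₀ a U u)
    (ha : UniformlyElliptic δ a) {p : SpaceTime d} (hpU : p ∈ U) (hp : t₀ < p.1) :
    δ ^ 2 * dirDeriv (spaceDir i₀) (dirDeriv (spaceDir i₀) u) p ^ 2 ≤
      2 * dirDeriv (timeDir d) u p ^ 2 + 2 * (d ^ 2 * δ⁻¹ ^ 2) *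
        ∑ q ∈ Finset.univ.erase (i₀, i₀),
          dirDeriv (spaceDir q.1) (dirDeriv (spaceDir q.2) u) p ^ 2 := by
  set H : Fin d × Fin d → ℝ := fun q => dirDeriv (spaceDir q.1) (dirDeriv (spaceDir q.2) u) p
  set s := p.2 i₀
  set S := ∑ q ∈ Finset.univ.erase (i₀, i₀), a s q.1 q.2 * H q
  have heqn : a s i₀ i₀ * H (i₀, i₀) = -(dirDeriv (timeDir d) u p + S) := by
    have heq := hu.eqn p hpU hp
    rw [← Fintype.sum_prod_type' (f := fun j k => a s j k * H (j, k)),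
      ← Finset.add_sum_erase _ _ (Finset.mem_univ (i₀, i₀))] at heq
    linarith
  have hcoeff : ∑ q ∈ Finset.univ.erase (i₀, i₀), a s q.1 q.2 ^ 2 ≤ d ^ 2 * δ⁻¹ ^ 2 :=
    calc ∑ q ∈ Finset.univ.erase (i₀, i₀), a s q.1 q.2 ^ 2
        ≤ ∑ q : Fin d × Fin d, a s q.1 q.2 ^ 2 :=
          Finset.sum_le_sum_of_subset_of_nonneg (Finset.erase_subset _ _) fun q _ _ => sq_nonneg _
      _ ≤ ∑ _q : Fin d × Fin d, δ⁻¹ ^ 2 :=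
          Finset.sum_le_sum fun q _ => sq_le_sq.2 ((ha.abs_le s q.1 q.2).trans (le_abs_self _))
      _ = d ^ 2 * δ⁻¹ ^ 2 := by simp [sq]
  calc δ ^ 2 * H (i₀, i₀) ^ 2 ≤ a s i₀ i₀ ^ 2 * H (i₀, i₀) ^ 2 :=
        mul_le_mul_of_nonneg_right (pow_le_pow_left₀ ha.pos.le (ha.le_diag s i₀) 2) (sq_nonneg _)
    _ = (dirDeriv (timeDir d) u p + S) ^ 2 := by rw [← mul_pow, heqn, neg_sq]
    _ ≤ 2 * dirDeriv (timeDir d) u p ^ 2 + 2 * S ^ 2 := add_sq_le.trans_eq (mul_add _ _ _)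
    _ ≤ _ := by
        rw [mul_assoc 2 (_ * _)]
        have hCauchySchwarz := Finset.sum_mul_sq_le_sq_mul_sq (Finset.univ.erase (i₀, i₀))
          (fun q => a s q.1 q.2) H
        gcongr
        exact hCauchySchwarz.trans (mul_le_mul_of_nonneg_right hcoeff
          (Finset.sum_nonneg fun q _ => sq_nonneg _))

theorem l2Controlled_spaceDir_spaceDir_self (hδ : 0 < δ) (hU : IsOpen U) :
    L2Controlled δ i₀ U [spaceDir i₀, spaceDir i₀] := by
  intro K hK hKU
  have htime := l2Controlled_timeDir (i₀ := i₀) hδ hU K hK hKU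
  have hspace := L2Bounded.sum (s := Finset.univ.erase (i₀, i₀)) fun q hq =>
    l2Controlled_spaceDir_spaceDir_of_ne (δ := δ) (i₀ := i₀) (j := q.2) (k := q.1) hU
      (fun h => Finset.ne_of_mem_erase hq (by simp_all [Prod.ext_iff])) K hK hKU
  refine (((htime.const_mul two_pos.le).add (hspace.const_mul
    (c := 2 * (d ^ 2 * δ⁻¹ ^ 2)) (by positivity))).const_mul
      (c := (δ ^ 2)⁻¹) (by positivity)).mono fun t₀ a u ha hu => ?_
  have hint : ∀ L, IntegrableOn (fun p => iterDirDeriv L u p ^ 2) K (volumeAfter d t₀) := fun L =>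
    ((contDiff_iterDirDeriv hu.contDiff L).continuous.pow 2).continuousOn.integrableOn_compact hK
  have hsum := integrable_finsetSum (Finset.univ.erase (i₀, i₀)) fun q _ =>
    hint [spaceDir q.2, spaceDir q.1]
  rw [← integral_finsetSum _ fun q _ => hint _, ← integral_const_mul, ← integral_const_mul,
    ← integral_add ((hint _).const_mul _) (hsum.const_mul _), ← div_eq_inv_mul,
    le_div_iff₀' (by positivity), ← integral_const_mul]
  refine integral_mono_ae ((hint _).const_mul _)
    (((hint _).const_mul _).add (hsum.const_mul _)) ?_
  filter_upwards [ae_restrict_mem hK.measurableSet,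
    ae_restrict_of_ae (ae_restrict_mem (measurableSet_after t₀))] with p hpK hp
  exact hu.sq_dirDeriv_normal_le ha (hKU hpK) hp

theorem L2Bounded.integral_iterDirDeriv_cons_mul_sq (hψ : IsTestFunction U ψ)
    (hcut : L2Bounded δ i₀ U fun t₀ u =>
      ∫ p, iterDirDeriv L (fun q => dirDeriv v ψ q * iterDirDeriv M u q) p ^ 2 ∂(volumeAfter d t₀))
    (hder : L2Bounded δ i₀ U fun t₀ u =>
      ∫ p, iterDirDeriv L (fun q => ψ q * iterDirDeriv (v :: M) u q) p ^ 2 ∂(volumeAfter d t₀)) :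
    L2Bounded δ i₀ U fun t₀ u =>
      ∫ p, iterDirDeriv (v :: L) (fun q => ψ q * iterDirDeriv M u q) p ^ 2 ∂(volumeAfter d t₀) := by
  refine ((hcut.const_mul two_pos.le).add (hder.const_mul two_pos.le)).mono
    fun t₀ a u _ hu => ?_
  have hMu := contDiff_iterDirDeriv hu.contDiff M
  have hvMu := contDiff_iterDirDeriv hu.contDiff (v :: M)
  have hleibniz : iterDirDeriv (v :: L) (fun q => ψ q * iterDirDeriv M u q) = fun p =>
      iterDirDeriv L (fun q => dirDeriv v ψ q * iterDirDeriv M u q) p +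
        iterDirDeriv L (fun q => ψ q * iterDirDeriv (v :: M) u q) p := by
    change iterDirDeriv L (dirDeriv v fun q => ψ q * iterDirDeriv M u q) = _
    rw [dirDeriv_mul hψ.contDiff hMu, dirDeriv_iterDirDeriv_comm hu.contDiff]
    exact iterDirDeriv_add ((contDiff_dirDeriv hψ.contDiff v).mul hMu) (hψ.contDiff.mul hvMu) L
  rw [hleibniz]
  exact (((hψ.dirDeriv v).mul_right hMu).iterDirDeriv L).integral_add_sq_le
    ((hψ.mul_right hvMu).iterDirDeriv L)

theorem L2Controlled.l2Bounded_integral_iterDirDeriv_mul_sq (hM : L2Controlled δ i₀ U M)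
    (hU : IsOpen U) (hL : ∀ v ∈ L, v.2 i₀ = 0 ∧ L2Controlled δ i₀ U [v])
    (hψ : IsTestFunction U ψ) :
    L2Bounded δ i₀ U fun t₀ u =>
      ∫ p, iterDirDeriv L (fun q => ψ q * iterDirDeriv M u q) p ^ 2 ∂(volumeAfter d t₀) := by
  induction L generalizing ψ M with
  | nil =>
    obtain ⟨C, hC, hbound⟩ := exists_integral_mul_le_mul_setIntegral (g := fun p => ψ p ^ 2)
      (hψ.contDiff.continuous.pow 2) hψ.hasCompactSupport fun p hp => by
        simp [image_eq_zero_of_notMem_tsupport hp]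
    refine ((hM _ hψ.hasCompactSupport hψ.tsupport_subset).const_mul hC).mono fun t₀ a u _ hu => ?_
    change ∫ p, (ψ p * iterDirDeriv M u p) ^ 2 ∂(volumeAfter d t₀) ≤ _
    simp only [mul_pow]
    exact hbound _ _ ((contDiff_iterDirDeriv hu.contDiff M).continuous.pow 2) fun p => sq_nonneg _
  | cons v L ih =>
    obtain ⟨⟨hvi₀, hv⟩, hL⟩ := List.forall_mem_cons.1 hL
    exact .integral_iterDirDeriv_cons_mul_sq hψ (ih hM hL (hψ.dirDeriv v))
      (ih (hM.cons hv hU hvi₀) hL hψ)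

namespace IsTestFunction

theorem enorm_le_lintegral_dirDeriv_timeDir (hF : IsTestFunction U F) (t₀ : ℝ) (x : Fin d → ℝ) :
    ‖F (t₀, x)‖ₑ ≤ ∫⁻ t in Ioi t₀, ‖dirDeriv (timeDir d) F (t, x)‖ₑ := by
  simpa only [add_smul_timeDir] using
    hF.enorm_le_lintegral_Ioi_dirDeriv_line timeDir_ne_zero (0, x) t₀

theorem enorm_le_lintegral_dirDeriv_spaceDir (hF : IsTestFunction U F) (t : ℝ) (x : Fin d → ℝ)
    (i : Fin d) :
    ‖F (t, x)‖ₑ ≤ ∫⁻ s, ‖dirDeriv (spaceDir i) F (t, Function.update x i s)‖ₑ := by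
  have hline := hF.enorm_le_lintegral_Ioi_dirDeriv_line (spaceDir_ne_zero i)
    (t, Function.update x i 0) (x i)
  simp only [add_smul_spaceDir, Function.update_eq_self] at hline
  exact hline.trans (setLIntegral_le_lintegral _ _)

theorem enorm_le_lmarginal_iterDirDeriv (hF : IsTestFunction U F) {I : List (Fin d)}
    (hI : I.Nodup) (t : ℝ) (x : Fin d → ℝ) :
    ‖F (t, x)‖ₑ ≤ lmarginal (fun _ => volume) I.toFinset
      (fun y => ‖iterDirDeriv (I.map spaceDir) F (t, y)‖ₑ) x := by
  induction I generalizing F x with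
  | nil => simp [iterDirDeriv]
  | cons i I ih =>
    obtain ⟨hi, hI⟩ := List.nodup_cons.1 hI
    have hmeas : Measurable fun y => ‖iterDirDeriv ((i :: I).map spaceDir) F (t, y)‖ₑ :=
      ((contDiff_iterDirDeriv hF.contDiff _).continuous.comp
        (Continuous.prodMk_right t)).measurable.enorm
    rw [List.toFinset_cons, lmarginal_insert _ hmeas (by simpa using hi)]
    exact (hF.enorm_le_lintegral_dirDeriv_spaceDir t x i).trans
      (lintegral_mono fun s => ih (hF.dirDeriv (spaceDir i)) hI _)

theorem enorm_le_lintegral_iterDirDeriv (hF : IsTestFunction U F) {I : List (Fin d)}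
    (hI : I.Nodup) (hmem : ∀ i, i ∈ I) (t₀ : ℝ) (x : Fin d → ℝ) :
    ‖F (t₀, x)‖ₑ ≤
      ∫⁻ p, ‖iterDirDeriv (I.map spaceDir ++ [timeDir d]) F p‖ₑ ∂(volumeAfter d t₀) := by
  have hspace := hF.enorm_le_lmarginal_iterDirDeriv hI t₀ x
  have huniv : I.toFinset = Finset.univ := Finset.eq_univ_of_forall fun i => by simp [hmem i]
  rw [huniv, lmarginal_univ] at hspace
  have hmeas : Measurable fun p =>
      ‖iterDirDeriv (I.map spaceDir ++ [timeDir d]) F p‖ₑ :=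
    (contDiff_iterDirDeriv hF.contDiff _).continuous.measurable.enorm
  rw [volumeAfter_eq_prod, lintegral_prod_symm _ hmeas.aemeasurable, iterDirDeriv_append]
  exact hspace.trans
    (lintegral_mono fun y => (hF.iterDirDeriv _).enorm_le_lintegral_dirDeriv_timeDir t₀ y)

theorem sq_le_measureReal_mul_integral_iterDirDeriv_sq (hF : IsTestFunction U F)
    (hU : IsCompact U) {I : List (Fin d)} (hI : I.Nodup) (hmem : ∀ i, i ∈ I) (t₀ : ℝ)
    (x : Fin d → ℝ) :
    F (t₀, x) ^ 2 ≤ volume.real U *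
      ∫ p, iterDirDeriv (I.map spaceDir ++ [timeDir d]) F p ^ 2 ∂(volumeAfter d t₀) := by
  have hsobolev := hF.enorm_le_lintegral_iterDirDeriv hI hmem t₀ x
  have hG := hF.iterDirDeriv (I.map spaceDir ++ [timeDir d])
  set G := iterDirDeriv (I.map spaceDir ++ [timeDir d]) F
  have hint : Integrable G (volumeAfter d t₀) :=
    hG.contDiff.continuous.integrable_of_hasCompactSupport hG.hasCompactSupport
  have hzero : ∀ p ∉ U, G p = 0 := fun p hp =>
    image_eq_zero_of_notMem_tsupport fun h => hp (hG.tsupport_subset h)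
  have habs : |F (t₀, x)| ≤ ∫ p in U, |G p| ∂(volumeAfter d t₀) := by
    rw [← ofReal_integral_norm_eq_lintegral_enorm hint, ← ofReal_norm,
      ENNReal.ofReal_le_ofReal_iff (integral_nonneg fun p => norm_nonneg _)] at hsobolev
    rwa [setIntegral_eq_integral_of_forall_compl_eq_zero fun p hp => by rw [hzero p hp, abs_zero]]
  have : IsFiniteMeasure ((volumeAfter d t₀).restrict U) := ⟨by simpa using hU.measure_lt_top⟩
  have hvol : ((volumeAfter d t₀).restrict U).real univ ≤ volume.real U := by
    rw [measureReal_restrict_apply_univ]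
    exact ENNReal.toReal_mono hU.measure_lt_top.ne (Measure.restrict_apply_le _ U)
  calc F (t₀, x) ^ 2 = |F (t₀, x)| ^ 2 := (sq_abs _).symm
    _ ≤ (∫ p in U, |G p| ∂(volumeAfter d t₀)) ^ 2 := pow_le_pow_left₀ (abs_nonneg _) habs 2
    _ ≤ ((volumeAfter d t₀).restrict U).real univ * ∫ p in U, |G p| ^ 2 ∂(volumeAfter d t₀) :=
        sq_integral_le_measureReal_mul_integral_sq hint.abs.integrableOn
          (by simpa only [sq_abs] using hG.integrable_sq.restrict)
    _ ≤ _ := by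
        simp only [sq_abs]
        exact mul_le_mul hvol (setIntegral_le_integral hG.integrable_sq
          (.of_forall fun p => sq_nonneg _)) (integral_nonneg fun p => sq_nonneg _)
          measureReal_nonneg

end IsTestFunction

-- Each axis is differentiated only once in the Sobolev embedding, so `x^{i₀}`, whose
-- derivative does not preserve the equation, enters with order at most one more than in `M`.
theorem L2Controlled.exists_sq_iterDirDeriv_le (hM : L2Controlled δ i₀ U M)
    (hM' : L2Controlled δ i₀ U (spaceDir i₀ :: M)) (hδ : 0 < δ) (hU : IsOpen U)
    {K₀ : Set (SpaceTime d)} (hK₀ : IsCompact K₀) (hK₀U : K₀ ⊆ U) :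
    ∃ C : ℝ, 0 ≤ C ∧ ∃ K, IsCompact K ∧ K ⊆ U ∧
      ∀ t₀ a u x, UniformlyElliptic δ a → IsSolutionAfter i₀ t₀ a U u → (t₀, x) ∈ K₀ →
        iterDirDeriv M u (t₀, x) ^ 2 ≤ C * ∫ p in K, u p ^ 2 ∂(volumeAfter d t₀) := by
  obtain ⟨ψ, hψ, hψK₀⟩ := exists_isTestFunction_eq_one_on hK₀ hU hK₀U
  set I : List (Fin d) := (Finset.univ.erase i₀).toList with hI
  have htangential : ∀ v ∈ I.map spaceDir ++ [timeDir d],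
      v.2 i₀ = 0 ∧ L2Controlled δ i₀ U [v] := by
    intro v hv
    rw [List.mem_append, List.mem_singleton, List.mem_map] at hv
    obtain ⟨i, hi, rfl⟩ | rfl := hv
    · have hne : i ≠ i₀ := by simpa [hI] using hi
      exact ⟨spaceDir_snd_eq_zero_of_ne hne, l2Controlled_spaceDir hU i⟩
    · exact ⟨rfl, l2Controlled_timeDir hδ hU⟩
  have hbounded := L2Bounded.integral_iterDirDeriv_cons_mul_sq hψ
    (hM.l2Bounded_integral_iterDirDeriv_mul_sq hU htangential (hψ.dirDeriv (spaceDir i₀)))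
    (hM'.l2Bounded_integral_iterDirDeriv_mul_sq hU htangential hψ)
  obtain ⟨C, hC, K, hK, hKU, hbound⟩ :=
    hbounded.const_mul (c := volume.real (tsupport ψ)) measureReal_nonneg
  refine ⟨C, hC, K, hK, hKU, fun t₀ a u x ha hu hx => le_trans ?_ (hbound t₀ a u ha hu)⟩
  have hψ' : IsTestFunction (tsupport ψ) ψ := { hψ with tsupport_subset := subset_rfl }
  have hnodup : (i₀ :: I).Nodup := List.nodup_cons.2 ⟨by simp [hI], Finset.nodup_toList _⟩
  have hmem : ∀ i, i ∈ i₀ :: I := fun i => by simp [hI, em]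
  have hψMu := hψ'.mul_right (contDiff_iterDirDeriv hu.contDiff M)
  simpa only [hψK₀ _ hx, one_mul, List.map_cons, List.cons_append] using
    hψMu.sq_le_measureReal_mul_integral_iterDirDeriv_sq hψ.hasCompactSupport hnodup hmem t₀ x

end InteriorEstimates

section Cylinders

variable {d : ℕ} {r ρ R : ℝ}

/-- The closed Euclidean ball of radius `r`, the compact counterpart of `ballE d r`. -/
def closedBallE (d : ℕ) (r : ℝ) : Set (Fin d → ℝ) := {x | ∑ j, x j ^ 2 ≤ r ^ 2}

theorem isCompact_closedBallE : IsCompact (closedBallE d r) := by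
  have hclosed : IsClosed (closedBallE d r) := isClosed_le (by fun_prop) continuous_const
  refine (isCompact_univ_pi fun _ => isCompact_Icc (a := -|r|) (b := |r|)).of_isClosed_subset
    hclosed fun x hx j _ => abs_le.1 (sq_le_sq.1 ?_)
  exact (Finset.single_le_sum (f := fun j => x j ^ 2) (fun _ _ => sq_nonneg _)
    (Finset.mem_univ j)).trans hx

theorem isOpen_ballE : IsOpen (ballE d r) :=
  isOpen_lt (by fun_prop) continuous_const

theorem isOpen_Qc : IsOpen (Qc d r) :=
  isOpen_Ioo.prod isOpen_ballE

theorem ballE_subset_closedBallE : ballE d r ⊆ closedBallE d r :=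
  fun x (hx : ∑ j, x j ^ 2 < r ^ 2) => hx.le

theorem closedBallE_subset_ballE (hρ : 0 ≤ ρ) (hρR : ρ < R) : closedBallE d ρ ⊆ ballE d R :=
  fun _ hx => lt_of_le_of_lt hx (pow_lt_pow_left₀ hρR hρ two_ne_zero)

theorem Qc_subset_Qc (hρ : 0 ≤ ρ) (hρR : ρ < R) : Qc d ρ ⊆ Qc d R :=
  prod_mono (Ioo_subset_Ioo_right (pow_le_pow_left₀ hρ hρR.le 2))
    (ballE_subset_closedBallE.trans (closedBallE_subset_ballE hρ hρR))

end Cylinders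

section LocalBoundedness

variable {d : ℕ} {δ s t₀ ρ R : ℝ} {i₀ : Fin d} {a : ℝ → Fin d → Fin d → ℝ}
  {K U V : Set (SpaceTime d)} {u h : SpaceTime d → ℝ} {M : List (SpaceTime d)}

theorem IsSolutionAfter.mono (hu : IsSolutionAfter i₀ s a U u) (hst₀ : s ≤ t₀) :
    IsSolutionAfter i₀ t₀ a U u where
  contDiff := hu.contDiff
  eqn p hp htp := hu.eqn p hp (hst₀.trans_lt htp)

theorem exists_isSolutionAfter_eqOn (hU : IsOpen U) (hV : IsOpen V) (hK : IsCompact K)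
    (hUK : U ∩ {p | s < p.1} ⊆ K) (hKV : K ⊆ V) (hh : ContDiffOn ℝ ∞ h V)
    (heqn : ∀ p ∈ V, pdt h p + ∑ j, ∑ k, a (p.2 i₀) j k * pdxx j k h p = 0) :
    ∃ u, IsSolutionAfter i₀ s a U u ∧ EqOn u h (U ∩ {p | s < p.1}) := by
  obtain ⟨u, hu, huh⟩ := exists_contDiff_eqOn hK hV hKV hh
  have hopen : IsOpen (U ∩ {p | s < p.1}) := hU.inter (isOpen_lt continuous_const continuous_fst)
  refine ⟨u, ⟨hu, fun p hpU hsp => ?_⟩, huh.mono hUK⟩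
  have hp : p ∈ U ∩ {p | s < p.1} := ⟨hpU, hsp⟩
  have heq : ∀ L, iterDirDeriv L u p = iterDirDeriv L h p := fun L =>
    (iterDirDeriv_congr_of_eventuallyEq ((huh.mono hUK).eventuallyEq_of_mem
      (hopen.mem_nhds hp)) L).eq_of_nhds
  have hdt : dirDeriv (timeDir d) u p = pdt h p := heq [timeDir d]
  have hdxx : ∀ j k, dirDeriv (spaceDir j) (dirDeriv (spaceDir k) u) p = pdxx j k h p :=
    fun j k => heq [spaceDir k, spaceDir j]
  simpa only [hdt, hdxx] using heqn p (hKV (hUK hp))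

theorem setIntegral_sq_volumeAfter_le (hK : MeasurableSet K) (hKV : K ∩ {p | t₀ < p.1} ⊆ V)
    (huh : EqOn u h (K ∩ {p | t₀ < p.1})) (hh : IntegrableOn (fun p => h p ^ 2) V) :
    ∫ p in K, u p ^ 2 ∂(volumeAfter d t₀) ≤ ∫ p in V, h p ^ 2 := by
  rw [volumeAfter, Measure.restrict_restrict hK, setIntegral_congr_fun
    (hK.inter (measurableSet_after t₀)) fun p hp => congrArg (· ^ 2) (huh hp)]
  exact setIntegral_mono_set hh (.of_forall fun p => sq_nonneg (h p)) (.of_forall hKV)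

theorem exists_isSolutionAfter_eventuallyEq (hρ : 0 ≤ ρ) (hρR : ρ < R) (ht₀ : 0 < t₀)
    (hh : ContDiffOn ℝ ∞ h (Qc d R))
    (heqn : ∀ p ∈ Qc d R, pdt h p + ∑ j, ∑ k, a (p.2 i₀) j k * pdxx j k h p = 0) :
    ∃ u, IsSolutionAfter i₀ t₀ a (Iio (ρ ^ 2) ×ˢ ballE d ρ) u ∧
      ∀ p ∈ Iio (ρ ^ 2) ×ˢ ballE d ρ, t₀ ≤ p.1 → u =ᶠ[𝓝 p] h := by
  have hU : IsOpen (Iio (ρ ^ 2) ×ˢ ballE d ρ) := isOpen_Iio.prod isOpen_ballE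
  have hUK : Iio (ρ ^ 2) ×ˢ ballE d ρ ∩ {p | t₀ / 2 < p.1} ⊆
      Icc (t₀ / 2) (ρ ^ 2) ×ˢ closedBallE d ρ := fun p hp =>
    ⟨⟨le_of_lt hp.2, le_of_lt hp.1.1⟩, ballE_subset_closedBallE hp.1.2⟩
  have hKQ : Icc (t₀ / 2) (ρ ^ 2) ×ˢ closedBallE d ρ ⊆ Qc d R :=
    prod_mono (Icc_subset_Ioo (half_pos ht₀) (pow_lt_pow_left₀ hρR hρ two_ne_zero))
      (closedBallE_subset_ballE hρ hρR)
  obtain ⟨u, hu, huh⟩ := exists_isSolutionAfter_eqOn hU isOpen_Qc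
    (isCompact_Icc.prod isCompact_closedBallE) hUK hKQ hh heqn
  refine ⟨u, hu.mono (half_le_self ht₀.le), fun p hp htp => huh.eventuallyEq_of_mem ?_⟩
  exact (hU.inter (isOpen_lt continuous_const continuous_fst)).mem_nhds
    ⟨hp, (half_lt_self ht₀).trans_le htp⟩

theorem exists_abs_iterDirDeriv_le (hM : ∀ U, IsOpen U → L2Controlled δ i₀ U M)
    (hM' : ∀ U, IsOpen U → L2Controlled δ i₀ U (spaceDir i₀ :: M)) (hδ : 0 < δ)
    (hρ : 0 ≤ ρ) (hρR : ρ < R) :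
    ∃ N : ℝ, 0 ≤ N ∧ ∀ a h, UniformlyElliptic δ a → ContDiffOn ℝ ∞ h (Qc d R) →
      IntegrableOn (fun p => h p ^ 2) (Qc d R) →
      (∀ p ∈ Qc d R, pdt h p + ∑ j, ∑ k, a (p.2 i₀) j k * pdxx j k h p = 0) →
      ∀ p ∈ Qc d ρ, |iterDirDeriv M h p| ≤ N * √(∫ p in Qc d R, h p ^ 2) := by
  obtain ⟨σ, hρσ, hσR⟩ := exists_between hρR
  have hσ : 0 ≤ σ := hρ.trans hρσ.le
  set U : Set (SpaceTime d) := Iio (σ ^ 2) ×ˢ ballE d σ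
  have hU : IsOpen U := isOpen_Iio.prod isOpen_ballE
  have hK₀U : Icc 0 (ρ ^ 2) ×ˢ closedBallE d ρ ⊆ U :=
    prod_mono (fun t ht => ht.2.trans_lt (pow_lt_pow_left₀ hρσ hρ two_ne_zero))
      (closedBallE_subset_ballE hρ hρσ)
  obtain ⟨C, hC, K, hK, hKU, hbound⟩ := (hM U hU).exists_sq_iterDirDeriv_le (hM' U hU) hδ hU
    (isCompact_Icc.prod isCompact_closedBallE) hK₀U
  refine ⟨√C, Real.sqrt_nonneg C, fun a h ha hh hL2 heqn => ?_⟩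
  rintro ⟨t₀, x⟩ ⟨ht₀, hx⟩
  have hmemK₀ : (t₀, x) ∈ Icc 0 (ρ ^ 2) ×ˢ closedBallE d ρ :=
    ⟨Ioo_subset_Icc_self ht₀, ballE_subset_closedBallE hx⟩
  obtain ⟨u, hu, huh⟩ := exists_isSolutionAfter_eventuallyEq hσ hσR ht₀.1 hh heqn
  have hUQ : K ∩ {p | t₀ < p.1} ⊆ Qc d R := fun p hp =>
    Qc_subset_Qc hσ hσR ⟨⟨ht₀.1.trans hp.2, (hKU hp.1).1⟩, (hKU hp.1).2⟩
  rw [← Real.sqrt_mul hC]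
  apply Real.abs_le_sqrt
  calc iterDirDeriv M h (t₀, x) ^ 2
      = iterDirDeriv M u (t₀, x) ^ 2 := by
        rw [(iterDirDeriv_congr_of_eventuallyEq
          (huh _ (hK₀U hmemK₀) le_rfl) M).eq_of_nhds]
    _ ≤ C * ∫ p in K, u p ^ 2 ∂(volumeAfter d t₀) := hbound t₀ a u x ha hu hmemK₀
    _ ≤ C * ∫ p in Qc d R, h p ^ 2 :=
        mul_le_mul_of_nonneg_left (setIntegral_sq_volumeAfter_le hK.measurableSet hUQ
          (fun p hp => (huh p (hKU hp.1) (le_of_lt hp.2)).eq_of_nhds) hL2) hC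

theorem stmt10_general (i₀ : Fin d) (hδ : 0 < δ) (hρ : 0 ≤ ρ) (hρR : ρ < R) :
    ∃ N : ℝ, 0 < N ∧ ∀ a h, UniformlyElliptic δ a → ContDiffOn ℝ ∞ h (Qc d R) →
      IntegrableOn (fun p => h p ^ 2) (Qc d R) →
      (∀ p ∈ Qc d R, pdt h p + ∑ j, ∑ k, a (p.2 i₀) j k * pdxx j k h p = 0) →
      (⨆ p ∈ Qc d ρ, |h p|) + (⨆ p ∈ Qc d ρ, |pdx i₀ h p|) ≤ N * √(∫ p in Qc d R, h p ^ 2) := by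
  obtain ⟨N, hN, hbound⟩ := exists_abs_iterDirDeriv_le (M := [])
    (fun U _ => l2Controlled_nil) (fun U hU => l2Controlled_spaceDir hU i₀) hδ hρ hρR
  obtain ⟨N', hN', hbound'⟩ := exists_abs_iterDirDeriv_le (M := [spaceDir i₀])
    (fun U hU => l2Controlled_spaceDir hU i₀)
    (fun U hU => l2Controlled_spaceDir_spaceDir_self hδ hU) hδ hρ hρR
  refine ⟨N + N' + 1, by positivity, fun a h ha hh hL2 heqn => ?_⟩
  set A := √(∫ p in Qc d R, h p ^ 2)
  have hA : 0 ≤ A := Real.sqrt_nonneg _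
  have hsup : (⨆ p ∈ Qc d ρ, |h p|) ≤ N * A := Real.iSup_le (fun p => Real.iSup_le
    (hbound a h ha hh hL2 heqn p) (by positivity)) (by positivity)
  have hsup' : (⨆ p ∈ Qc d ρ, |pdx i₀ h p|) ≤ N' * A := Real.iSup_le (fun p => Real.iSup_le
    (hbound' a h ha hh hL2 heqn p) (by positivity)) (by positivity)
  linarith

end LocalBoundedness

end

theorem stmt10 (d : ℕ) (hd : 0 < d) (δ : ℝ) (hδ : δ ∈ Set.Ioo (0 : ℝ) 1)
    (r : ℝ) (hr2 : 2 < r) (hr3 : r < 3) :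
    ∃ N : ℝ, 0 < N ∧
      ∀ a : ℝ → Fin d → Fin d → ℝ,
        (∀ j k, Measurable fun s => a s j k) →
        (∀ s j k, a s j k = a s k j) →
        (∀ (s : ℝ) (θ : Fin d → ℝ),
          δ * ∑ j, (θ j) ^ 2 ≤ ∑ j, ∑ k, a s j k * θ j * θ k ∧
          ∑ j, ∑ k, a s j k * θ j * θ k ≤ δ⁻¹ * ∑ j, (θ j) ^ 2) →
        ∀ h : ℝ × (Fin d → ℝ) → ℝ,
          ContDiffOn ℝ (⊤ : ℕ∞) h (Qc d 4) →
          IntegrableOn (fun p => (h p) ^ 2) (Qc d 4) →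
          (∀ p ∈ Qc d 4,
            pdt h p + ∑ j, ∑ k, a (p.2 ⟨0, hd⟩) j k * pdxx j k h p = 0) →
          (⨆ p ∈ Qc d 1, |h p|) + (⨆ p ∈ Qc d 1, |pdx ⟨0, hd⟩ h p|)
            ≤ N * Real.sqrt (∫ p in Qc d r, (h p) ^ 2) := by
  have hr4 : Qc d r ⊆ Qc d 4 := Qc_subset_Qc (by linarith) (by linarith)
  obtain ⟨N, hN, hbound⟩ :=
    stmt10_general (R := r) (⟨0, hd⟩ : Fin d) hδ.1 zero_le_one (by linarith)
  exact ⟨N, hN, fun a hmeas hsymm hell h hh hL2 heqn => hbound a h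
    ⟨hδ.1, hmeas, hsymm, fun s θ => (hell s θ).1, fun s θ => (hell s θ).2⟩
    (hh.mono hr4) (hL2.mono_set hr4) fun p hp => heqn p (hr4 hp)⟩
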